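/- For all integers n ≥ 1 and g ≥ 1, the Lusternik–Schnirelmann category of the n-th symmetric product of the closed non-orientable surface of genus g is cat(SP^n(N_g)) = 2n. -/

import Mathlib

open scoped unitInterval Topology
open MeasureTheory
noncomputable section

/-- The `n`-th symmetric product relation on `X^n`: two tuples are related iff they
differ by a permutation of coordinates. -/
def spRel (n : ℕ) (X : Type*) (s t : Fin n → X) : Prop :=
  ∃ e : Equiv.Perm (Fin n), s ∘ e = t

/-- The `n`-th symmetric product of a topological space `X`: the quotient of the
product space `X^n` by the permutation action of the symmetric group `S_n`,
equipped with the quotient topology. -/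
def SP (n : ℕ) (X : Type*) [TopologicalSpace X] : Type _ :=
  Quot (spRel n X)

instance (n : ℕ) (X : Type*) [TopologicalSpace X] : TopologicalSpace (SP n X) :=
  inferInstanceAs (TopologicalSpace (Quot (spRel n X)))

/-- The inclusion of a subset, as a continuous map. -/
def inclMap {X : Type*} [TopologicalSpace X] (U : Set X) : C(U, X) :=
  ⟨Subtype.val, continuous_subtype_val⟩

/-- `catLE X r` : `X` is covered by `r+1` open sets, each of whose inclusion maps
into `X` is null-homotopic. -/
def catLE (X : Type*) [TopologicalSpace X] (r : ℕ) : Prop :=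
  ∃ U : Fin (r + 1) → Set X, (∀ i, IsOpen (U i)) ∧ (⋃ i, U i) = Set.univ ∧
    ∀ i, (inclMap (U i)).Nullhomotopic

/-- The Lusternik–Schnirelmann category of `X`, valued in `ℕ∞`. -/
def LScat (X : Type*) [TopologicalSpace X] : ℕ∞ :=
  sInf {c : ℕ∞ | ∃ r : ℕ, catLE X r ∧ c = r}

/-- The closed unit disc (a topological model for a polygon). -/
abbrev Disc : Type := {z : ℂ // ‖z‖ ≤ 1}

/-- The point at parameter `t ∈ [0,1]` on the `k`-th of the `N` boundary edges of an
`N`-gon, realized as the closed unit disc whose boundary circle is divided into `N` arcs. -/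
def polyBP (N k : ℕ) (t : ℝ) : ℂ :=
  Complex.exp (2 * Real.pi * Complex.I * (((k : ℝ) + t) / (N : ℝ)))

/-- Boundary identifications of the `2g`-gon for the edge word `e₁²e₂²⋯e_g²` :
the point at parameter `t` on edge `2j` is glued to the point at parameter `t`
on edge `2j+1`. -/
def nonorientRel (g : ℕ) (z w : Disc) : Prop :=
  ∃ j : Fin g, ∃ t : ℝ, 0 ≤ t ∧ t ≤ 1 ∧
    (z : ℂ) = polyBP (2 * g) (2 * (j : ℕ)) t ∧
    (w : ℂ) = polyBP (2 * g) (2 * (j : ℕ) + 1) t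

/-- The closed non-orientable surface of genus `g ≥ 1` : the quotient of the `2g`-gon
by the boundary edge word `e₁²e₂²⋯e_g²`. -/
def Ng (g : ℕ) : Type := Quot (nonorientRel g)

instance (g : ℕ) : TopologicalSpace (Ng g) :=
  inferInstanceAs (TopologicalSpace (Quot (nonorientRel g)))

/-! ### Combinatorics: the Kuhn triangulation and the Stokes formula mod 2 -/
namespace LSNg

theorem z2_add_self (x : ZMod 2) : x + x = 0 := CharTwo.add_self_eq_zero x

/-- mod 2 coboundary of a cochain on lists. -/
def ldel {α : Type*} (A : List α → ZMod 2) (l : List α) : ZMod 2 :=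
  ∑ i ∈ Finset.range l.length, A (l.eraseIdx i)

theorem ldel_cons {α : Type*} (A : List α → ZMod 2) (v : α) (t : List α) :
    ldel A (v :: t) = A t + ldel (fun s => A (v :: s)) t := by
  unfold ldel
  rw [List.length_cons, Finset.sum_range_succ']
  simp [add_comm]

theorem ldel_map {α β : Type*} (A : List β → ZMod 2) (f : α → β) (l : List α) :
    ldel (fun s => A (s.map f)) l = ldel A (l.map f) := by
  unfold ldel
  simp [List.eraseIdx_map]

section Kuhn
variable {ι : Type*} [DecidableEq ι]

/-- increase one coordinate by one. -/
def bump (v : ι → ℕ) (c : ι) : ι → ℕ := Function.update v c (v c + 1)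

theorem bump_apply (v : ι → ℕ) (c d : ι) : bump v c d = v d + if d = c then 1 else 0 := by
  unfold bump
  by_cases h : d = c
  · subst h; simp
  · simp [h]

theorem bump_comm (v : ι → ℕ) (c d : ι) : bump (bump v c) d = bump (bump v d) c := by
  ext x
  simp only [bump_apply]; omega

/-- Sum of a cochain over the simplices of the Kuhn triangulation of a unit cube. -/
def kT : ℕ → Finset ι → (ι → ℕ) → (List (ι → ℕ) → ZMod 2) → ZMod 2
  | 0, _, v, A => A [v]
  | k + 1, S, v, A => ∑ c ∈ S, kT k (S.erase c) (bump v c) (fun t => A (v :: t))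

theorem kT_add (k : ℕ) (S : Finset ι) (v : ι → ℕ) (A B : List (ι → ℕ) → ZMod 2) :
    kT k S v (fun l => A l + B l) = kT k S v A + kT k S v B := by
  induction k generalizing S v A B with
  | zero => rfl
  | succ k ih =>
    simp only [kT]
    rw [← Finset.sum_add_distrib]
    exact Finset.sum_congr rfl fun c _ => ih _ _ _ _

theorem symm_sum_zero (S : Finset ι) (F : ι → ι → ZMod 2)
    (hF : ∀ c ∈ S, ∀ d ∈ S, F c d = F d c) :
    ∑ c ∈ S, ∑ d ∈ S.erase c, F c d = 0 := by
  rw [Finset.sum_sigma']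
  refine Finset.sum_involution (fun x _ => ⟨x.2, x.1⟩) ?_ ?_ ?_ ?_
  · rintro ⟨c, d⟩ h
    simp only [Finset.mem_sigma, Finset.mem_erase] at h
    simp only
    rw [hF c h.1 d h.2.2, z2_add_self]
  · rintro ⟨c, d⟩ h _ h2
    simp only [Finset.mem_sigma, Finset.mem_erase] at h
    simp only [Sigma.mk.injEq, heq_eq_eq] at h2
    exact h.2.1 h2.1
  · rintro ⟨c, d⟩ h
    simp only [Finset.mem_sigma, Finset.mem_erase] at h ⊢
    exact ⟨h.2.2, fun e => h.2.1 e.symm, h.1⟩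
  · rintro ⟨c, d⟩ h
    rfl

theorem kT_stokes (k : ℕ) (S : Finset ι) (hS : S.card = k + 1) (v : ι → ℕ)
    (A : List (ι → ℕ) → ZMod 2) :
    kT (k + 1) S v (ldel A) =
      ∑ c ∈ S, (kT k (S.erase c) (bump v c) A + kT k (S.erase c) v A) := by
  induction k generalizing S v A with
  | zero =>
    obtain ⟨c, rfl⟩ := Finset.card_eq_one.mp hS
    simp [kT, ldel, Finset.sum_range_succ]
  | succ k ih =>
    have h1 : kT (k + 1 + 1) S v (ldel A) = ∑ c ∈ S, (kT (k+1) (S.erase c) (bump v c) A +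
        kT (k+1) (S.erase c) (bump v c) (ldel (fun t => A (v :: t)))) := by
      rw [kT]
      refine Finset.sum_congr rfl fun c _ => ?_
      rw [← kT_add]
      congr 1
      ext t
      rw [ldel_cons]
    rw [h1, Finset.sum_add_distrib, Finset.sum_add_distrib]
    congr 1
    have h2 : ∀ c ∈ S, kT (k+1) (S.erase c) (bump v c) (ldel (fun t => A (v :: t))) =
        ∑ d ∈ S.erase c, kT k ((S.erase c).erase d) (bump (bump v c) d) (fun t => A (v :: t)) +
        ∑ d ∈ S.erase c, kT k ((S.erase c).erase d) (bump v c) (fun t => A (v :: t)) := by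
      intro c hc
      rw [ih (S.erase c) (by rw [Finset.card_erase_of_mem hc, hS]; rfl), Finset.sum_add_distrib]
    rw [Finset.sum_congr rfl h2, Finset.sum_add_distrib, symm_sum_zero, zero_add]
    · have h3 : ∀ c ∈ S, kT (k+1) (S.erase c) v A =
        ∑ d ∈ S.erase c, kT k ((S.erase c).erase d) (bump v d) (fun t => A (v :: t)) :=
        fun c _ => rfl
      rw [Finset.sum_congr rfl h3]
      rw [Finset.sum_sigma', Finset.sum_sigma']
      refine Finset.sum_bij' (fun x _ => ⟨x.2, x.1⟩) (fun x _ => ⟨x.2, x.1⟩) ?_ ?_ ?_ ?_ ?_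
      · rintro ⟨c, d⟩ h
        simp only [Finset.mem_sigma, Finset.mem_erase] at h ⊢
        exact ⟨h.2.2, fun e => h.2.1 e.symm, h.1⟩
      · rintro ⟨c, d⟩ h
        simp only [Finset.mem_sigma, Finset.mem_erase] at h ⊢
        exact ⟨h.2.2, fun e => h.2.1 e.symm, h.1⟩
      · rintro ⟨c, d⟩ h; rfl
      · rintro ⟨c, d⟩ h; rfl
      · rintro ⟨c, d⟩ h
        simp only
        rw [Finset.erase_right_comm]
    · intro c _ d _
      rw [Finset.erase_right_comm, bump_comm]

theorem kT_congr (k : ℕ) (S : Finset ι) (v : ι → ℕ) (A B : List (ι → ℕ) → ZMod 2)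
    (h : ∀ l : List (ι → ℕ), l.length = k + 1 → v ∈ l →
      (∀ w ∈ l, ∀ c, v c ≤ w c ∧ w c ≤ v c + if c ∈ S then 1 else 0) → A l = B l) :
    kT k S v A = kT k S v B := by
  induction k generalizing S v A B with
  | zero =>
    refine h [v] rfl (by simp) ?_
    intro w hw c
    simp only [List.mem_singleton] at hw
    subst hw
    simp
  | succ k ih =>
    simp only [kT]
    refine Finset.sum_congr rfl fun c hc => ih _ _ _ _ ?_
    intro l hl _ hw
    refine h (v :: l) (by simp [hl]) (by simp) ?_
    intro w hw' d
    rcases List.mem_cons.mp hw' with rfl | hw'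
    · simp
    · have := hw w hw' d
      rw [bump_apply] at this
      by_cases hd : d = c
      · subst hd
        simp [hc] at this ⊢
        omega
      · simpa [hd] using this

theorem kT_map (ρ : Equiv.Perm ι) (τ : (ι → ℕ) → (ι → ℕ))
    (hτ : ∀ v c, τ (bump v c) = bump (τ v) (ρ c)) (k : ℕ) (S : Finset ι) (v : ι → ℕ)
    (A : List (ι → ℕ) → ZMod 2) :
    kT k (S.map ρ.toEmbedding) (τ v) A = kT k S v (fun l => A (l.map τ)) := by
  induction k generalizing S v A with
  | zero => rfl
  | succ k ih =>
    simp only [kT, Finset.sum_map]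
    refine Finset.sum_congr rfl fun c _ => ?_
    have := ih (S.erase c) (bump v c) (fun t => A (τ v :: t))
    rw [Finset.map_erase, hτ] at this
    exact this

/-- swapping two coordinates. -/
def swp (c d : ι) (v : ι → ℕ) : ι → ℕ := v ∘ Equiv.swap c d

theorem swp_bump (c d : ι) (v : ι → ℕ) (e : ι) :
    swp c d (bump v e) = bump (swp c d v) (Equiv.swap c d e) := by
  ext x
  simp only [swp, Function.comp, bump_apply]
  congr 2
  rw [Equiv.swap_apply_eq_iff]

theorem map_swap_eq (c d : ι) (S : Finset ι) (hc : c ∈ S) (hd : d ∈ S) :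
    S.map (Equiv.swap c d).toEmbedding = S := by
  apply Finset.eq_of_subset_of_card_le
  · intro x hx
    simp only [Finset.mem_map, Equiv.coe_toEmbedding] at hx
    obtain ⟨y, hy, rfl⟩ := hx
    rw [Equiv.swap_apply_def]
    split_ifs <;> assumption
  · simp

theorem kT_swap_zero (c d : ι) (hcd : c ≠ d) (k : ℕ) (S : Finset ι) (hS : S.card = k)
    (hc : c ∈ S) (hd : d ∈ S) (v : ι → ℕ) (hv : swp c d v = v)
    (A : List (ι → ℕ) → ZMod 2) (hA : ∀ l, A (l.map (swp c d)) = A l) :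
    kT k S v A = 0 := by
  induction k generalizing S v A with
  | zero =>
    rw [Finset.card_eq_zero] at hS
    subst hS; simp at hc
  | succ k ih =>
    have hAaux : ∀ l, A (v :: l.map (swp c d)) = A (v :: l) := by
      intro l
      have := hA (v :: l)
      rwa [List.map_cons, hv] at this
    simp only [kT]
    rw [← Finset.add_sum_erase S _ hc, ← Finset.add_sum_erase (S.erase c) _
      (Finset.mem_erase.mpr ⟨hcd.symm, hd⟩), ← add_assoc]
    rw [Finset.sum_eq_zero, add_zero]
    · have := kT_map (Equiv.swap c d) (swp c d) (swp_bump c d) k (S.erase c) (bump v c)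
        (fun t => A (v :: t))
      simp only [hAaux] at this
      rw [← this, Finset.map_erase, swp_bump, hv, map_swap_eq c d S hc hd]
      simp only [Equiv.coe_toEmbedding, Equiv.swap_apply_left]
      exact z2_add_self _
    · intro e he
      simp only [Finset.mem_erase] at he
      apply ih
      · rw [Finset.card_erase_of_mem he.2.2, hS]; rfl
      · simp [hc, he.2.1.symm]
      · simp [hd, he.1.symm]
      · rw [swp_bump, hv, Equiv.swap_apply_of_ne_of_ne he.2.1 he.1]
      · exact hAaux

/-- If a cochain kills all chains containing both `w` and `bump w c`, it is zero on the cube. -/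
theorem kT_degen (c : ι) (k : ℕ) (S : Finset ι) (hS : S.card = k) (hc : c ∈ S) (v : ι → ℕ)
    (A : List (ι → ℕ) → ZMod 2)
    (hA : ∀ l w, w ∈ l → bump w c ∈ l → A l = 0) : kT k S v A = 0 := by
  have hz : ∀ (k : ℕ) (S : Finset ι) (v : ι → ℕ), kT k S v (fun _ => 0) = 0 := by
    intro k
    induction k with
    | zero => intros; rfl
    | succ k ih => intro S v; simp [kT, ih]
  induction k generalizing S v A with
  | zero =>
    rw [Finset.card_eq_zero] at hS
    subst hS; simp at hc
  | succ k ih =>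
    simp only [kT]
    refine Finset.sum_eq_zero fun e he => ?_
    by_cases h : e = c
    · subst h
      rw [← hz k (S.erase e) (bump v e)]
      apply kT_congr
      intro l _ hl _
      exact hA (v :: l) v (by simp) (by simp [hl])
    · apply ih
      · rw [Finset.card_erase_of_mem he, hS]; rfl
      · simp [hc, Ne.symm h]
      · intro l w h1 h2
        exact hA (v :: l) w (by simp [h1]) (by simp [h2])

/-- Translation in a direction `c` -/
def shf (c : ι) (M : ℕ) (v : ι → ℕ) : ι → ℕ := Function.update v c (v c + M)

theorem shf_apply (c : ι) (M : ℕ) (v : ι → ℕ) (d : ι) :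
    shf c M v d = v d + if d = c then M else 0 := by
  unfold shf
  by_cases h : d = c
  · subst h; simp
  · simp [h]

theorem kT_shf (c : ι) (M : ℕ) (k : ℕ) (S : Finset ι) (v : ι → ℕ)
    (A : List (ι → ℕ) → ZMod 2) :
    kT k S (shf c M v) A = kT k S v (fun l => A (l.map (shf c M))) := by
  have := kT_map (Equiv.refl ι) (shf c M) (by
    intro v e; ext x; simp only [shf_apply, bump_apply, Equiv.refl_apply]; omega) k S v A
  simpa using this

variable [Fintype ι]

/-- base points of the unit cubes of a box. -/
def kB (S : Finset ι) (ℓ p : ι → ℕ) : Finset (ι → ℕ) :=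
  Fintype.piFinset (fun c => if c ∈ S then Finset.range (ℓ c) else {p c})

theorem mem_kB (S : Finset ι) (ℓ p v : ι → ℕ) :
    v ∈ kB S ℓ p ↔ (∀ c ∈ S, v c < ℓ c) ∧ ∀ c ∉ S, v c = p c := by
  simp only [kB, Fintype.mem_piFinset]
  constructor
  · intro h
    exact ⟨fun c hc => by simpa [hc] using h c, fun c hc => by simpa [hc] using h c⟩
  · rintro ⟨h1, h2⟩ c
    by_cases hc : c ∈ S
    · simpa [hc] using h1 c hc
    · simpa [hc] using h2 c hc

theorem kB_split (S : Finset ι) (ℓ p : ι → ℕ) (c : ι) (hc : c ∈ S) (f : (ι → ℕ) → ZMod 2) :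
    ∑ v ∈ kB S ℓ p, f v =
      ∑ x ∈ Finset.range (ℓ c), ∑ v ∈ kB (S.erase c) ℓ (Function.update p c x), f v := by
  rw [← Finset.sum_fiberwise_of_maps_to (t := Finset.range (ℓ c)) (g := fun v => v c)]
  · refine Finset.sum_congr rfl fun x hx => Finset.sum_congr ?_ fun _ _ => rfl
    ext v
    simp only [Finset.mem_filter, mem_kB, Finset.mem_erase]
    constructor
    · rintro ⟨⟨h1, h2⟩, h3⟩
      refine ⟨fun d hd => h1 d hd.2, fun d hd => ?_⟩
      by_cases h : d = c
      · subst h; simpa using h3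
      · simp only [h, ne_eq, not_false_eq_true, true_and] at hd
        simp [h, h2 d hd]
    · rintro ⟨h1, h2⟩
      have h3 : v c = x := by simpa using h2 c (by simp)
      refine ⟨⟨fun d hd => ?_, fun d hd => ?_⟩, h3⟩
      · by_cases h : d = c
        · subst h; rw [h3]; simpa using hx
        · exact h1 d ⟨h, hd⟩
      · have h : d ≠ c := fun e => hd (e ▸ hc)
        simpa [h] using h2 d (by simp [hd])
  · intro v hv
    rw [mem_kB] at hv
    simpa using hv.1 c hc

theorem kB_bump (S : Finset ι) (ℓ p : ι → ℕ) (c : ι) (hc : c ∉ S) (x : ℕ)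
    (f : (ι → ℕ) → ZMod 2) :
    ∑ v ∈ kB S ℓ (Function.update p c x), f (bump v c) =
      ∑ v ∈ kB S ℓ (Function.update p c (x + 1)), f v := by
  refine Finset.sum_bij' (fun v _ => bump v c) (fun v _ => Function.update v c x) ?_ ?_ ?_ ?_ ?_
  · intro v hv
    rw [mem_kB] at hv ⊢
    refine ⟨fun d hd => ?_, fun d hd => ?_⟩
    · have : d ≠ c := fun e => hc (e ▸ hd)
      simpa [bump_apply, this] using hv.1 d hd
    · by_cases h : d = c
      · subst h
        simpa [bump_apply] using hv.2 d hd
      · simpa [bump_apply, h] using hv.2 d hd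
  · intro v hv
    rw [mem_kB] at hv ⊢
    refine ⟨fun d hd => ?_, fun d hd => ?_⟩
    · have : d ≠ c := fun e => hc (e ▸ hd)
      simpa [this] using hv.1 d hd
    · by_cases h : d = c
      · subst h
        simp
      · simpa [h] using hv.2 d hd
  · intro v hv
    rw [mem_kB] at hv
    ext d
    by_cases h : d = c
    · subst h
      simpa using (hv.2 d hc).symm
    · simp [h, bump_apply]
  · intro v hv
    rw [mem_kB] at hv
    ext d
    by_cases h : d = c
    · subst h
      simpa [bump_apply] using (hv.2 d hc).symm
    · simp [h, bump_apply]
  · intro v hv; rfl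

/-- Sum of a cochain over the Kuhn triangulation of a box. -/
def kK (k : ℕ) (S : Finset ι) (ℓ p : ι → ℕ) (A : List (ι → ℕ) → ZMod 2) : ZMod 2 :=
  ∑ v ∈ kB S ℓ p, kT k S v A

theorem kK_add (k : ℕ) (S : Finset ι) (ℓ p : ι → ℕ) (A B : List (ι → ℕ) → ZMod 2) :
    kK k S ℓ p (fun l => A l + B l) = kK k S ℓ p A + kK k S ℓ p B := by
  unfold kK
  rw [← Finset.sum_add_distrib]
  exact Finset.sum_congr rfl fun v _ => kT_add _ _ _ _ _

theorem kK_stokes (k : ℕ) (S : Finset ι) (hS : S.card = k + 1) (ℓ p : ι → ℕ)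
    (A : List (ι → ℕ) → ZMod 2) :
    kK (k + 1) S ℓ p (ldel A) = ∑ c ∈ S,
      (kK k (S.erase c) ℓ (Function.update p c (ℓ c)) A +
        kK k (S.erase c) ℓ (Function.update p c 0) A) := by
  unfold kK
  rw [Finset.sum_congr rfl fun v _ => kT_stokes k S hS v A, Finset.sum_comm]
  refine Finset.sum_congr rfl fun c hc => ?_
  rw [kB_split S ℓ p c hc]
  simp only [Finset.sum_add_distrib]
  have : ∀ x, ∑ v ∈ kB (S.erase c) ℓ (Function.update p c x), kT k (S.erase c) (bump v c) A =
    ∑ v ∈ kB (S.erase c) ℓ (Function.update p c (x+1)), kT k (S.erase c) v A :=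
    fun x => kB_bump (S.erase c) ℓ p c (by simp) x (fun v => kT k (S.erase c) v A)
  simp only [this]
  generalize hG : (fun x => ∑ v ∈ kB (S.erase c) ℓ (Function.update p c x),
    kT k (S.erase c) v A) = G
  have hG' : ∀ x, ∑ v ∈ kB (S.erase c) ℓ (Function.update p c x), kT k (S.erase c) v A = G x :=
    fun x => congrFun hG x
  simp only [hG']
  generalize ℓ c = m
  induction m with
  | zero => simp [z2_add_self]
  | succ m ih =>
    rw [Finset.sum_range_succ, Finset.sum_range_succ]
    have := z2_add_self (G m)
    linear_combination ih + this

theorem kK_congr (k : ℕ) (S : Finset ι) (ℓ p : ι → ℕ) (A B : List (ι → ℕ) → ZMod 2)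
    (h : ∀ l : List (ι → ℕ), l.length = k + 1 → (∀ w ∈ l, (∀ c ∈ S, w c ≤ ℓ c) ∧
      (∀ c ∉ S, w c = p c)) → (∀ u ∈ l, ∀ w ∈ l, ∀ c, u c ≤ w c + 1) → A l = B l) :
    kK k S ℓ p A = kK k S ℓ p B := by
  refine Finset.sum_congr rfl fun v hv => kT_congr _ _ _ _ _ ?_
  rw [mem_kB] at hv
  intro l hl _ hw
  refine h l hl ?_ ?_
  · intro w hwl
    refine ⟨fun c hc => ?_, fun c hc => ?_⟩
    · have h1 := hw w hwl c
      have h2 := hv.1 c hc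
      simp [hc] at h1
      omega
    · have h1 := hw w hwl c
      have h2 := hv.2 c hc
      simp [hc] at h1
      omega
  · intro u hu w hwl c
    have h1 := hw w hwl c
    have h2 := hw u hu c
    split_ifs at h1 h2 <;> omega

theorem kK_swap_zero (c d : ι) (hcd : c ≠ d) (k : ℕ) (S : Finset ι) (hS : S.card = k)
    (hc : c ∈ S) (hd : d ∈ S) (ℓ p : ι → ℕ) (hℓ : ℓ c = ℓ d)
    (A : List (ι → ℕ) → ZMod 2) (hA : ∀ l, A (l.map (swp c d)) = A l) :
    kK k S ℓ p A = 0 := by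
  refine Finset.sum_involution (fun v _ => swp c d v) ?_ ?_ ?_ ?_
  · intro v hv
    have := kT_map (Equiv.swap c d) (swp c d) (swp_bump c d) k S v A
    rw [map_swap_eq c d S hc hd] at this
    simp only [hA] at this
    rw [this, z2_add_self]
  · intro v hv h h2
    exact h (kT_swap_zero c d hcd k S hS hc hd v h2 A hA)
  · intro v hv
    rw [mem_kB] at hv ⊢
    have hdef : ∀ e, swp c d v e = v (Equiv.swap c d e) := fun _ => rfl
    refine ⟨fun e he => ?_, fun e he => ?_⟩
    · rw [hdef]
      by_cases h1 : e = c
      · subst h1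
        rw [Equiv.swap_apply_left, hℓ]
        exact hv.1 _ hd
      · by_cases h2 : e = d
        · subst h2
          rw [Equiv.swap_apply_right, ← hℓ]
          exact hv.1 _ hc
        · rw [Equiv.swap_apply_of_ne_of_ne h1 h2]
          exact hv.1 _ he
    · rw [hdef, Equiv.swap_apply_of_ne_of_ne (by rintro rfl; exact he hc)
        (by rintro rfl; exact he hd)]
      exact hv.2 _ he
  · intro v hv
    ext e
    simp [swp]

theorem kK_degen (c : ι) (k : ℕ) (S : Finset ι) (hS : S.card = k) (hc : c ∈ S) (ℓ p : ι → ℕ)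
    (A : List (ι → ℕ) → ZMod 2)
    (hA : ∀ l w, w ∈ l → bump w c ∈ l → A l = 0) : kK k S ℓ p A = 0 :=
  Finset.sum_eq_zero fun v _ => kT_degen c k S hS hc v A hA

theorem kB_shf (S : Finset ι) (ℓ p : ι → ℕ) (c : ι) (hc : c ∉ S) (x M : ℕ)
    (f : (ι → ℕ) → ZMod 2) :
    ∑ v ∈ kB S ℓ (Function.update p c x), f (shf c M v) =
      ∑ v ∈ kB S ℓ (Function.update p c (x + M)), f v := by
  induction M generalizing f with
  | zero =>
    refine Finset.sum_congr rfl fun v _ => ?_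
    congr 1; ext d; simp [shf_apply]
  | succ M ih =>
    rw [← add_assoc, ← kB_bump S ℓ p c hc, ← ih (fun v => f (bump v c))]
    refine Finset.sum_congr rfl fun v _ => ?_
    congr 1; ext d; simp only [shf_apply, bump_apply]; split_ifs <;> omega

end Kuhn
end LSNg

/-! ### the Ky Fan alternating cochain -/
namespace LSNg

/-- signed labels, ordered lexicographically. -/
abbrev Lab : Type := ℕ ×ₗ Bool

/-- The unsigned part of a label. -/
def Lab.key (x : Lab) : ℕ := (ofLex x).1
/-- The sign of a label. -/
def Lab.sg (x : Lab) : Bool := (ofLex x).2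
/-- The opposite label. -/
def Lab.neg (x : Lab) : Lab := toLex (x.key, !x.sg)

theorem Lab.key_neg (x : Lab) : x.neg.key = x.key := rfl
theorem Lab.sg_neg (x : Lab) : x.neg.sg = !x.sg := rfl
theorem Lab.le_of_key_lt {x y : Lab} (h : x.key < y.key) : x ≤ y :=
  Prod.Lex.le_iff.mpr (Or.inl h)
theorem Lab.key_le_of_le {x y : Lab} (h : x ≤ y) : x.key ≤ y.key := by
  rcases Prod.Lex.le_iff.mp h with h | h
  · exact h.le
  · exact h.1.le

/-- alternation of signs, starting with `b`. -/
def alt : Bool → List Lab → ZMod 2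
  | _, [] => 1
  | b, x :: l => if x.sg = b then alt (!b) l else 0

theorem ldel_zero {α : Type*} (l : List α) : ldel (fun _ => 0) l = 0 := by simp [ldel]

theorem ldel_alt (b : Bool) (l : List Lab) : ldel (alt b) l = alt b l + alt (!b) l := by
  induction l generalizing b with
  | nil => simp only [ldel, alt]; rfl
  | cons x l ih =>
    rw [ldel_cons]
    by_cases h : x.sg = b
    · have h2 : x.sg ≠ !b := by rw [h]; simp
      simp only [alt, h, if_true]
      have e : (fun s => alt (!b) s) = alt (!b) := rfl
      rw [e, ih, Bool.not_not]
      have := z2_add_self (alt b l)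
      simp
      linear_combination this
    · have h2 : x.sg = !b := by
        revert h; cases x.sg <;> cases b <;> simp
      simp only [alt, h, if_false, h2, if_true, Bool.not_not]
      simp [ldel_zero]

theorem ldel_perm {α : Type*} {l m : List α} (h : l.Perm m) (A : List α → ZMod 2)
    (hA : ∀ s t : List α, s.Perm t → A s = A t) : ldel A l = ldel A m := by
  induction h generalizing A with
  | nil => rfl
  | cons x h ih =>
    rw [ldel_cons, ldel_cons, hA _ _ h, ih]
    intro s t hst
    exact hA _ _ (hst.cons x)
  | swap x y t =>
    simp only [ldel_cons]
    have : (fun s => A (y :: x :: s)) = fun s => A (x :: y :: s) := by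
      ext s; exact hA _ _ (List.Perm.swap _ _ _)
    rw [this]; ring
  | trans _ _ h1 h2 => rw [h1 A hA, h2 A hA]

/-- The Ky Fan cochain. -/
def fan (l : List Lab) : ZMod 2 :=
  if (l.map Lab.key).Nodup then alt true (Multiset.sort (l : Multiset Lab)) else 0

theorem fan_perm {l m : List Lab} (h : l.Perm m) : fan l = fan m := by
  unfold fan
  rw [Multiset.coe_eq_coe.mpr h]
  have : (l.map Lab.key).Nodup ↔ (m.map Lab.key).Nodup := (h.map _).nodup_iff
  simp [this]

theorem fan_zero {l : List Lab} (h : ¬ (l.map Lab.key).Nodup) : fan l = 0 := by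
  unfold fan; rw [if_neg h]

/-- strict sortedness by key. -/
def SS (l : List Lab) : Prop := l.Pairwise (fun x y => x.key < y.key)

theorem fan_SS {l : List Lab} (h : SS l) : fan l = alt true l := by
  have h1 : (l.map Lab.key).Nodup := by
    rw [List.Nodup, List.pairwise_map]
    exact h.imp (fun h => h.ne)
  unfold fan
  rw [if_pos h1]
  congr 1
  have h2 : l.Pairwise (fun x y => x ≤ y) := h.imp Lab.le_of_key_lt
  refine List.Perm.eq_of_pairwise (le := fun x y => x ≤ y) ?_ ?_ h2 ?_
  · intro a b _ _ h1 h2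
    exact le_antisymm h1 h2
  · exact Multiset.pairwise_sort _ _
  · exact Multiset.coe_eq_coe.mp (Multiset.sort_eq _ _)

theorem alt_neg (b : Bool) (l : List Lab) : alt b (l.map Lab.neg) = alt (!b) l := by
  induction l generalizing b with
  | nil => rfl
  | cons x l ih =>
    simp only [List.map_cons, alt, ih, Lab.sg_neg]
    cases x.sg <;> cases b <;> simp

theorem ldel_fan (l : List Lab) (hl : ∀ x ∈ l, ∀ y ∈ l, x.key = y.key → x = y) :
    ldel fan l = fan l + fan (l.map Lab.neg) := by
  have hkn : (l.map Lab.neg).map Lab.key = l.map Lab.key := by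
    rw [List.map_map]; rfl
  by_cases h : (l.map Lab.key).Nodup
  · obtain ⟨m, hm, hS⟩ : ∃ m : List Lab, l.Perm m ∧ SS m := by
      refine ⟨Multiset.sort (l : Multiset Lab), ?_, ?_⟩
      · exact Multiset.coe_eq_coe.mp (Multiset.sort_eq _ _).symm
      · have h1 := Multiset.pairwise_sort (l : Multiset Lab) (fun a b => a ≤ b)
        have h2 : (((l : Multiset Lab).sort).map Lab.key).Nodup := by
          refine (List.Perm.nodup_iff ?_).mp h
          apply List.Perm.map
          exact Multiset.coe_eq_coe.mp (Multiset.sort_eq _ _).symm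
        rw [List.Nodup, List.pairwise_map] at h2
        exact (h1.and h2).imp (fun h => lt_of_le_of_ne (Lab.key_le_of_le h.1) h.2)
    rw [ldel_perm hm fan (fun s t => fan_perm), fan_perm hm, fan_perm (hm.map Lab.neg), fan_SS hS,
      fan_SS (l := m.map Lab.neg), alt_neg, ← ldel_alt]
    · unfold ldel
      refine Finset.sum_congr rfl fun i _ => fan_SS ?_
      exact hS.sublist (List.eraseIdx_sublist _ _)
    · unfold SS
      rw [List.pairwise_map]
      exact hS
  · rw [fan_zero h, fan_zero (hkn ▸ h), add_zero]
    have hnd : ¬ l.Nodup := fun h2 => h (List.Nodup.map_on (fun x hx y hy => hl x hx y hy) h2)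
    obtain ⟨x, hx⟩ : ∃ x, List.Duplicate x l := by
      exact List.exists_duplicate_iff_not_nodup.mpr hnd
    have h1 : [x, x].Sublist l := List.duplicate_iff_sublist.mp hx
    obtain ⟨t, ht⟩ : ∃ t, l.Perm (x :: x :: t) := by
      obtain ⟨t, ht⟩ := h1.exists_perm_append
      exact ⟨t, ht⟩
    rw [ldel_perm ht fan (fun s t => fan_perm)]
    simp only [ldel_cons]
    have : (fun s => fan (x :: x :: s)) = fun _ => 0 := by
      ext s; exact fan_zero (by simp)
    rw [this, ldel_zero, add_zero, z2_add_self]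

end LSNg

/-! ### The combinatorial theorem -/
namespace LSNg

section Box
variable {ι : Type*} [DecidableEq ι] [Fintype ι]

theorem kB_irrel (S : Finset ι) (ℓ p : ι → ℕ) (c : ι) (hc : c ∉ S) (x : ℕ) :
    kB S (Function.update ℓ c x) p = kB S ℓ p := by
  ext v
  rw [mem_kB, mem_kB]
  refine and_congr_left fun _ => forall_congr' fun d => ?_
  refine imp_congr_right fun hd => ?_
  rw [Function.update_of_ne (by rintro rfl; exact hc hd)]

theorem kK_irrel (k : ℕ) (S : Finset ι) (ℓ p : ι → ℕ) (c : ι) (hc : c ∉ S) (x : ℕ)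
    (A : List (ι → ℕ) → ZMod 2) :
    kK k S (Function.update ℓ c x) p A = kK k S ℓ p A := by
  unfold kK; rw [kB_irrel S ℓ p c hc]

theorem kK_shf (k : ℕ) (S : Finset ι) (ℓ p : ι → ℕ) (c : ι) (hc : c ∉ S) (x M : ℕ)
    (A : List (ι → ℕ) → ZMod 2) :
    kK k S ℓ (Function.update p c (x + M)) A =
      kK k S ℓ (Function.update p c x) (fun l => A (l.map (shf c M))) := by
  unfold kK
  rw [← kB_shf S ℓ p c hc x M]
  exact Finset.sum_congr rfl fun v _ => kT_shf _ _ _ _ _ _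

theorem kK_split (k : ℕ) (S : Finset ι) (ℓ p : ι → ℕ) (c : ι) (hc : c ∈ S) (m M : ℕ)
    (A : List (ι → ℕ) → ZMod 2) :
    kK k S (Function.update ℓ c (m * M)) p A = ∑ i ∈ Finset.range m,
      kK k S (Function.update ℓ c M) p (fun l => A (l.map (shf c (i * M)))) := by
  unfold kK
  rw [kB_split _ _ _ c hc]
  simp only [Function.update_self]
  rw [Finset.sum_congr rfl fun x _ => by rw [kB_irrel _ _ _ c (by simp)]]
  induction m with
  | zero => simp
  | succ m ih =>
    rw [add_mul, one_mul, Finset.sum_range_add, ih, Finset.sum_range_succ]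
    congr 1
    rw [kB_split _ _ _ c hc]
    simp only [Function.update_self]
    refine Finset.sum_congr rfl fun x _ => ?_
    rw [kB_irrel _ _ _ c (by simp), add_comm, ← kB_shf _ _ _ c (by simp)]
    exact Finset.sum_congr rfl fun v _ => kT_shf _ _ _ _ _ _

end Box

/-- coordinates of the cube. -/
abbrev Co (n : ℕ) : Type := Fin n ⊕ Fin n

/-- index of a coordinate. -/
def cidx {n : ℕ} (c : Co n) : ℕ := Sum.elim Fin.val Fin.val c

/-- hypotheses on a labelling of the grid. -/
structure Good (n g M : ℕ) (lab : (Co n → ℕ) → Lab) : Prop where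
  hLR : ∀ w j, w (Sum.inl j) = 0 → lab (Function.update w (Sum.inl j) (2 * g * M)) = lab w
  hB : ∀ w j x, w (Sum.inr j) = 0 → lab (Function.update w (Sum.inl j) x) = lab w
  hSw : ∀ w (j j' : Fin n), (j' : ℕ) = j + 1 → w (Sum.inr j) = 2 * g * M →
    lab (swp (Sum.inl j) (Sum.inl j') w) = lab w
  hT0 : ∀ w (j : Fin n), (∀ i, j ≤ i → w (Sum.inr i) = 2 * g * M) → w (Sum.inl j) ≤ M →
    lab (shf (Sum.inl j) M w) = (lab w).neg
  hT1 : ∀ w (j : Fin n) (i : ℕ), (∀ i, j ≤ i → w (Sum.inr i) = 2 * g * M) → 1 ≤ i → i < g →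
    2 * i * M ≤ w (Sum.inl j) → w (Sum.inl j) ≤ (2 * i + 1) * M →
    lab (shf (Sum.inl j) M w) = lab w
  hN : ∀ u w, (∀ c, u c ≤ w c + 1) → (∀ c, w c ≤ u c + 1) → (lab u).key = (lab w).key →
    lab u = lab w

theorem fan_neg_zero {l : List Lab} (h : ¬ (l.map Lab.key).Nodup) : fan (l.map Lab.neg) = 0 := by
  apply fan_zero
  rw [List.map_map]
  exact h

section
variable {n g M : ℕ} {lab : (Co n → ℕ) → Lab}

theorem not_nodup_of_two {α β : Type*} (l : List α) (f : α → β) (x y : α) (hx : x ∈ l)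
    (hy : y ∈ l) (hxy : x ≠ y) (hf : f x = f y) : ¬ (l.map f).Nodup :=
  fun h => hxy (List.inj_on_of_nodup_map h hx hy hf)

theorem swap_face (h : Good n g M lab) (a : List Lab → ZMod 2) (k : ℕ) (S : Finset (Co n))
    (hS : S.card = k) (ℓ p : Co n → ℕ) (j j' : Fin n) (hj : (j' : ℕ) = j + 1)
    (h1 : Sum.inl j ∈ S) (h2 : Sum.inl j' ∈ S) (h3 : Sum.inr j ∉ S)
    (hp : p (Sum.inr j) = 2 * g * M) (hℓ : ℓ (Sum.inl j) = ℓ (Sum.inl j')) :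
    kK k S ℓ p (fun l => a (l.map lab)) = 0 := by
  set lab' : (Co n → ℕ) → Lab := fun w => lab (Function.update w (Sum.inr j) (2 * g * M))
    with hlab'
  have hjj : j ≠ j' := by rintro rfl; omega
  have e1 : kK k S ℓ p (fun l => a (l.map lab)) = kK k S ℓ p (fun l => a (l.map lab')) := by
    apply kK_congr
    intro l _ hl _
    congr 1
    refine List.map_congr_left fun w hw => ?_
    rw [hlab']
    simp only
    rw [← hp, ← (hl w hw).2 _ h3, Function.update_eq_self]
  rw [e1]
  refine kK_swap_zero (Sum.inl j) (Sum.inl j') (by simpa using hjj) k S hS h1 h2 ℓ p hℓ _ ?_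
  intro l
  rw [List.map_map]
  congr 1
  refine List.map_congr_left fun w _ => ?_
  simp only [Function.comp, hlab']
  rw [← h.hSw _ j j' hj (Function.update_self _ _ _)]
  congr 1
  ext c
  simp only [swp, Function.comp]
  by_cases hc : c = Sum.inr j
  · subst hc
    rw [Equiv.swap_apply_of_ne_of_ne (by simp) (by simp)]
    simp
  · rw [Function.update_of_ne hc, Function.update_of_ne]
    · simp
    · rw [ne_eq, Equiv.swap_apply_eq_iff, Equiv.swap_apply_of_ne_of_ne (by simp) (by simp)]
      exact hc

theorem bottom_face (h : Good n g M lab) (k : ℕ) (S : Finset (Co n))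
    (hS : S.card = k) (ℓ p : Co n → ℕ) (j : Fin n)
    (h1 : Sum.inl j ∈ S) (h3 : Sum.inr j ∉ S) (hp : p (Sum.inr j) = 0) :
    kK k S ℓ p (fun l => fan (l.map lab)) = 0 := by
  set lab' : (Co n → ℕ) → Lab := fun w => lab (Function.update w (Sum.inr j) 0) with hlab'
  have e1 : kK k S ℓ p (fun l => fan (l.map lab)) = kK k S ℓ p (fun l => fan (l.map lab')) := by
    apply kK_congr
    intro l _ hl _
    congr 1
    refine List.map_congr_left fun w hw => ?_
    rw [hlab']
    simp only
    rw [← hp, ← (hl w hw).2 _ h3, Function.update_eq_self]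
  rw [e1]
  refine kK_degen (Sum.inl j) k S hS h1 ℓ p _ ?_
  intro l w hw hw'
  apply fan_zero
  rw [List.map_map]
  refine not_nodup_of_two l _ w _ hw hw' ?_ ?_
  · intro e
    have := congrFun e (Sum.inl j)
    simp [bump_apply] at this
  · simp only [Function.comp, hlab', bump]
    rw [Function.update_comm (by simp), h.hB _ _ _ (by simp)]

theorem side_face (h : Good n g M lab) (a : List Lab → ZMod 2) (k : ℕ) (S : Finset (Co n))
    (ℓ p : Co n → ℕ) (j : Fin n) (h1 : Sum.inl j ∉ S) :
    kK k S ℓ (Function.update p (Sum.inl j) (2 * g * M)) (fun l => a (l.map lab)) +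
      kK k S ℓ (Function.update p (Sum.inl j) 0) (fun l => a (l.map lab)) = 0 := by
  have e1 := kK_shf k S ℓ p (Sum.inl j) h1 0 (2 * g * M) (fun l => a (l.map lab))
  rw [zero_add] at e1
  rw [e1]
  rw [kK_congr k S ℓ _ _ (fun l => a (l.map lab)), z2_add_self]
  intro l _ hl _
  simp only [List.map_map]
  congr 1
  refine List.map_congr_left fun w hw => ?_
  have : w (Sum.inl j) = 0 := by simpa using (hl w hw).2 _ h1
  rw [← h.hLR w j this]
  simp [shf, this]

theorem T_face (h : Good n g M lab) (hg : 1 ≤ g) (a : List Lab → ZMod 2) (k : ℕ)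
    (S : Finset (Co n)) (ℓ p : Co n → ℕ) (j : Fin n)
    (h1 : Sum.inl j ∈ S) (h3 : ∀ i, j ≤ i → Sum.inr i ∉ S)
    (hp : ∀ i, j ≤ i → p (Sum.inr i) = 2 * g * M) (hℓ : ℓ (Sum.inl j) = 2 * g * M) :
    kK k S ℓ p (fun l => a (l.map lab)) =
      kK k S (Function.update ℓ (Sum.inl j) M) p (fun l => a (l.map lab)) +
      kK k S (Function.update ℓ (Sum.inl j) M) p (fun l => a ((l.map lab).map Lab.neg)) := by
  have e0 : ℓ = Function.update ℓ (Sum.inl j) ((2 * g) * M) := by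
    rw [← hℓ, Function.update_eq_self]
  have key : ∀ i m : ℕ, (∀ w : Co n → ℕ, w (Sum.inl j) ≤ M →
      (∀ i, j ≤ i → w (Sum.inr i) = 2 * g * M) →
      lab (shf (Sum.inl j) (i * M) w) = lab (shf (Sum.inl j) (m * M) w)) →
      kK k S (Function.update ℓ (Sum.inl j) M) p
        (fun l => a ((l.map (shf (Sum.inl j) (i * M))).map lab)) =
      kK k S (Function.update ℓ (Sum.inl j) M) p
        (fun l => a ((l.map (shf (Sum.inl j) (m * M))).map lab)) := by
    intro i m him
    apply kK_congr
    intro l _ hl _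
    simp only [List.map_map]
    congr 1
    refine List.map_congr_left fun w hw => him w ?_ ?_
    · simpa using (hl w hw).1 _ h1
    · intro i hi
      rw [(hl w hw).2 _ (h3 i hi), hp i hi]
  conv_lhs => rw [e0]
  rw [kK_split _ _ _ _ _ h1]
  have hs : ∀ (f : ℕ → ZMod 2) (m : ℕ), ∑ i ∈ Finset.range (2 * m), f i =
      ∑ i ∈ Finset.range m, (f (2 * i) + f (2 * i + 1)) := by
    intro f m
    induction m with
    | zero => simp
    | succ m ih =>
      rw [mul_add, mul_one, Finset.sum_range_succ, Finset.sum_range_succ, ih,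
        Finset.sum_range_succ]
      ring
  rw [hs, Finset.sum_eq_single 0]
  · congr 1
    · congr 1
      ext l
      congr 2
      conv_rhs => rw [← List.map_id l]
      refine List.map_congr_left fun w _ => ?_
      simp [shf]
    · apply kK_congr
      intro l _ hl _
      simp only [List.map_map]
      congr 1
      refine List.map_congr_left fun w hw => ?_
      simp only [Function.comp]
      rw [← h.hT0 w j]
      · simp
      · intro i hi
        rw [(hl w hw).2 _ (h3 i hi), hp i hi]
      · simpa using (hl w hw).1 _ h1
  · intro i hi hi0
    rw [key (2 * i + 1) (2 * i), z2_add_self]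
    intro w hw hw2
    have := h.hT1 (shf (Sum.inl j) (2 * i * M) w) j i ?_ (by omega) (by simpa using hi) ?_ ?_
    · rw [← this]
      congr 1
      ext c
      simp only [shf_apply]
      split_ifs <;> ring
    · intro i hi
      simpa [shf_apply] using hw2 i hi
    · simp [shf_apply]
    · simp only [shf_apply, if_true]
      linarith
  · intro h0
    simp at h0
    omega

/-- coordinates of small index. -/
def cS (n k : ℕ) : Finset (Co n) := Finset.univ.filter (fun c => cidx c < k)

theorem mem_cS (k : ℕ) (c : Co n) : c ∈ cS n k ↔ cidx c < k := by simp [cS]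

theorem cS_erase (k : ℕ) (hk : k < n) :
    ((cS n (k + 1)).erase (Sum.inr ⟨k, hk⟩)).erase (Sum.inl ⟨k, hk⟩) = cS n k := by
  ext c
  rcases c with ⟨i, hi⟩ | ⟨i, hi⟩ <;> simp [mem_cS, cidx] <;> omega

theorem cS_card (k : ℕ) (hk : k ≤ n) : (cS n k).card = 2 * k := by
  induction k with
  | zero => simp [cS]
  | succ k ih =>
    have h1 := ih (by omega)
    rw [← cS_erase k (by omega), Finset.card_erase_of_mem, Finset.card_erase_of_mem] at h1
    · have : (1 : ℕ) < (cS n (k+1)).card := by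
        rw [Finset.one_lt_card]
        exact ⟨Sum.inl ⟨k, by omega⟩, by simp [mem_cS, cidx], Sum.inr ⟨k, by omega⟩,
          by simp [mem_cS, cidx], by simp⟩
      omega
    · simp [mem_cS, cidx]
    · simp [mem_cS, cidx]

/-- base point -/
def cp (n L : ℕ) : Co n → ℕ := Sum.elim (fun _ => 0) (fun _ => L)

/-- The degree count at stage `k`. -/
def cD (n g M : ℕ) (lab : (Co n → ℕ) → Lab) (k : ℕ) : ZMod 2 :=
  kK (2 * k) (cS n k) (fun _ => 2 * g * M) (cp n (2 * g * M))
    (fun l => fan (l.map lab) + fan ((l.map lab).map Lab.neg))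

theorem kK_ldel (h : Good n g M lab) (k : ℕ) (S : Finset (Co n)) (ℓ p : Co n → ℕ) :
    kK k S ℓ p (fun l => fan (l.map lab) + fan ((l.map lab).map Lab.neg)) =
    kK k S ℓ p (ldel (fun l => fan (l.map lab))) := by
  apply kK_congr
  intro l _ _ hl
  rw [ldel_map fan, ldel_fan]
  intro x hx y hy
  rw [List.mem_map] at hx hy
  obtain ⟨u, hu, rfl⟩ := hx
  obtain ⟨w, hw, rfl⟩ := hy
  exact h.hN u w (hl u hu w hw) (hl w hw u hu)

theorem cD_zero : cD n g M lab 0 = 1 := by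
  have hS : cS n 0 = ∅ := by simp [cS]
  unfold cD
  rw [hS]
  have hB : kB (∅ : Finset (Co n)) (fun _ => 2 * g * M) (cp n (2 * g * M)) =
      {cp n (2 * g * M)} := by
    ext v
    simp [mem_kB, funext_iff]
  unfold kK
  rw [hB, Finset.sum_singleton]
  simp only [mul_zero, kT, List.map_cons, List.map_nil]
  rw [fan_SS (by simp [SS]), fan_SS (by simp [SS])]
  simp only [alt]
  show ((if _ = _ then (1 : ZMod 2) else 0) + if _ = _ then (1 : ZMod 2) else 0) = 1
  rcases Bool.eq_false_or_eq_true (lab (cp n (2 * g * M))).sg with hb | hb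
  · rw [if_pos hb, if_neg (by simp [Lab.sg_neg, hb]), add_zero]
  · rw [if_neg (by simp [Lab.sg_neg, hb]), if_pos (by simp [Lab.sg_neg, hb]), zero_add]

theorem cD_succ (h : Good n g M lab) (hg : 1 ≤ g) (k : ℕ) (hk : k < n) :
    cD n g M lab (k + 1) = cD n g M lab k := by
  set L := 2 * g * M with hL
  set p := cp n L with hp
  set c : Co n := Sum.inl ⟨k, hk⟩ with hc
  set d : Co n := Sum.inr ⟨k, hk⟩ with hd
  have hcard := cS_card (n := n) (k + 1) hk
  have hdm : d ∈ cS n (k + 1) := by simp [mem_cS, cidx, hd]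
  have hcm : c ∈ cS n (k + 1) := by simp [mem_cS, cidx, hc]
  have hpd : Function.update p d L = p := by
    have : p d = L := by simp [hp, cp, hd]
    rw [← this, Function.update_eq_self]
  have hpc : Function.update p c 0 = p := by
    have : p c = 0 := by simp [hp, cp, hc]
    rw [← this, Function.update_eq_self]
  have s1 : cD n g M lab (k + 1) = kK (2 * k + 1) ((cS n (k + 1)).erase d) (fun _ => L) p
      (fun l => fan (l.map lab)) := by
    unfold cD
    rw [kK_ldel h, show 2 * (k + 1) = (2 * k + 1) + 1 by ring, kK_stokes _ _ (by rw [hcard]; ring),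
      Finset.sum_eq_single d]
    · rw [bottom_face h _ _ _ _ (Function.update (cp n (2 * g * M)) d 0) ⟨k, hk⟩]
      · rw [add_zero, ← hL, ← hp, hpd]
      · rw [Finset.mem_erase]; exact ⟨by simp [hd], hcm⟩
      · simp [hd]
      · simp [hd]
      · rw [Finset.card_erase_of_mem hdm, hcard]; omega
    · intro e he hed
      rcases e with j | j
      · exact side_face h fan _ _ _ _ j (by simp)
      · have hj : (j : ℕ) < k := by
          have h1 : (j : ℕ) < k + 1 := by simpa [mem_cS, cidx] using he
          have h2 : (j : ℕ) ≠ k := by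
            intro e; apply hed; rw [hd]; congr 1; exact Fin.ext e
          omega
        rw [bottom_face h _ _ _ _ (Function.update _ _ 0) j, add_zero]
        · refine swap_face h fan _ _ ?_ _ _ j ⟨j + 1, by omega⟩ rfl ?_ ?_ (by simp) (by simp) rfl
          · rw [Finset.card_erase_of_mem he, hcard]; omega
          · simp [mem_cS, cidx]; omega
          · simp [mem_cS, cidx]; omega
        · simp [mem_cS, cidx]; omega
        · simp
        · simp
        · rw [Finset.card_erase_of_mem he, hcard]; omega
    · intro h; exact absurd hdm h
  set S := (cS n (k + 1)).erase d with hS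
  have hScard : S.card = 2 * k + 1 := by
    rw [Finset.card_erase_of_mem hdm, hcard]; omega
  have hcS : c ∈ S := by rw [hS, Finset.mem_erase]; exact ⟨by simp [hd, hc], hcm⟩
  rw [s1, T_face h hg fan (2 * k + 1) S _ p ⟨k, hk⟩ hcS ?_ ?_ rfl, ← kK_add, kK_ldel h,
    kK_stokes _ _ hScard, Finset.sum_eq_single c]
  · have hSc : S.erase c = cS n k := cS_erase k hk
    have hcn : c ∉ cS n k := by simp [mem_cS, cidx, hc]
    rw [hSc, hpc]
    simp only [← hc]
    rw [kK_irrel _ _ _ _ _ hcn, kK_irrel _ _ _ _ _ hcn]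
    have e1 := kK_shf (2 * k) (cS n k) (fun _ => L) p c hcn 0 M (fun l => fan (l.map lab))
    rw [zero_add] at e1
    rw [Function.update_self, e1]
    unfold cD
    rw [kK_add, add_comm]
    congr 1
    rw [hpc]
    apply kK_congr
    intro l _ hl _
    simp only [List.map_map]
    congr 1
    refine List.map_congr_left fun w hw => ?_
    have hwc : w c = 0 := by
      rw [(hl w hw).2 _ hcn]; simp [hp, cp, hc]
    refine h.hT0 w ⟨k, hk⟩ ?_ (by rw [← hc, hwc]; omega)
    intro i hi
    have hi : k ≤ (i : ℕ) := hi
    rw [(hl w hw).2 _ (by simp [mem_cS, cidx]; omega)]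
    simp [hp, cp, hL]
  · intro e he hec
    rcases e with j | j
    · have hu : Function.update (fun _ => 2 * g * M) (Sum.inl ⟨k, hk⟩ : Co n) M (Sum.inl j) =
          2 * g * M := by
        rw [Function.update_of_ne hec]
      rw [hu]
      exact side_face h fan _ _ _ _ j (by simp)
    · have hj : (j : ℕ) < k := by
        have h1 : j ≠ ⟨k, hk⟩ ∧ (j : ℕ) < k + 1 := by simpa [hS, mem_cS, cidx, hd] using he
        have h2 : (j : ℕ) ≠ k := by
          intro e; apply h1.1; exact Fin.ext e
        omega
      have hcard2 : (S.erase (Sum.inr j)).card = 2 * k := by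
        rw [Finset.card_erase_of_mem he, hScard]; omega
      have hu : Function.update (fun _ => 2 * g * M) (Sum.inl ⟨k, hk⟩ : Co n) M (Sum.inr j) =
          2 * g * M := by
        rw [Function.update_of_ne (by simp)]
      have hm : ∀ i : Fin n, (i : ℕ) ≤ k → Sum.inl i ∈ S.erase (Sum.inr j) := by
        intro i hi
        simp [hS, mem_cS, cidx, hd]; omega
      rw [bottom_face h _ _ hcard2 _ (Function.update _ _ 0) j (hm j hj.le) (by simp) (by simp),
        add_zero, hu]
      by_cases hjk : (j : ℕ) + 1 = k
      · have hjne : (Sum.inl j : Co n) ≠ Sum.inl ⟨k, hk⟩ := by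
          intro e
          have := congrArg Fin.val (Sum.inl_injective e)
          simp at this; omega
        rw [T_face h hg fan (2 * k) _ _ _ j (hm j hj.le)]
        · have hsame : Function.update (Function.update (fun _ => 2 * g * M)
              (Sum.inl ⟨k, hk⟩ : Co n) M) (Sum.inl j) M (Sum.inl j) =
              Function.update (Function.update (fun _ => 2 * g * M)
              (Sum.inl ⟨k, hk⟩ : Co n) M) (Sum.inl j) M (Sum.inl ⟨k, hk⟩ : Co n) := by
            rw [Function.update_self, Function.update_of_ne hjne.symm, Function.update_self]
          rw [swap_face h fan (2 * k) _ hcard2 _ _ j ⟨k, hk⟩ hjk.symm (hm j hj.le)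
              (hm _ le_rfl) (by simp) (by simp) hsame,
            swap_face h (fun l => fan (l.map Lab.neg)) (2 * k) _ hcard2 _ _ j ⟨k, hk⟩ hjk.symm
              (hm j hj.le) (hm _ le_rfl) (by simp) (by simp) hsame, add_zero]
        · intro i hi
          have hi : (j : ℕ) ≤ i := hi
          simp only [hS, Finset.mem_erase, mem_cS, hd, cidx]
          rintro ⟨h1, h2, h3⟩
          simp only [Sum.elim_inr] at h3
          by_cases hij : (i : ℕ) = k
          · exact h2 (congrArg Sum.inr (Fin.ext hij))
          · exact h1 (congrArg Sum.inr (Fin.ext (by omega)))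
        · intro i hi
          by_cases hij : i = j
          · subst hij; simp
          · rw [Function.update_of_ne (by simpa using hij)]
            simp [hp, cp, hL]
        · rw [Function.update_of_ne hjne]
      · refine swap_face h fan _ _ hcard2 _ _ j ⟨j + 1, by omega⟩ rfl (hm _ hj.le) (hm _ hj)
          (by simp) (by simp) ?_
        rw [Function.update_of_ne, Function.update_of_ne]
        · intro e
          have := congrArg Fin.val (Sum.inl_injective e)
          simp at this; omega
        · intro e
          have := congrArg Fin.val (Sum.inl_injective e)
          simp at this; omega
  · intro h; exact absurd hcS h
  · intro i hi
    have hi : k ≤ (i : ℕ) := hi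
    simp only [hS, Finset.mem_erase, mem_cS, hd, cidx]
    rintro ⟨h2, h3⟩
    simp only [Sum.elim_inr] at h3
    exact h2 (congrArg Sum.inr (Fin.ext (by simp; omega)))
  · intro i hi
    simp [hp, cp, hL]

theorem comb_main (h : Good n g M lab) (hg : 1 ≤ g) : ∃ w, 2 * n ≤ (lab w).key := by
  by_contra! hcon
  have h1 : ∀ k ≤ n, cD n g M lab k = 1 := by
    intro k
    induction k with
    | zero => intro _; exact cD_zero
    | succ k ih => intro hk; rw [cD_succ h hg k hk, ih (by omega)]
  have h2 : cD n g M lab n = 0 := by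
    unfold cD
    rw [kK_congr _ _ _ _ _ (fun _ => (0 : ZMod 2) + 0)]
    · rw [kK_add, z2_add_self]
    · intro l hl _ _
      have hnd : ¬ ((l.map lab).map Lab.key).Nodup := by
        intro hnd
        have hsub : ((l.map lab).map Lab.key).toFinset ⊆ Finset.range (2 * n) := by
          intro x hx
          simp only [List.mem_toFinset, List.map_map, List.mem_map, Function.comp] at hx
          obtain ⟨w, _, rfl⟩ := hx
          simpa using hcon w
        have := Finset.card_le_card hsub
        rw [List.toFinset_card_of_nodup hnd] at this
        simp [hl] at this
      rw [fan_zero hnd, fan_neg_zero hnd]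
  rw [h1 n le_rfl] at h2
  exact one_ne_zero h2

end
end LSNg

/-! ### Polar coordinates, descent to the surface, separation -/
namespace LSNg

/-- the unit circle with period one -/
def ee (x : ℝ) : ℂ := Complex.exp (2 * Real.pi * Complex.I * x)

theorem ee_cont : Continuous ee := by unfold ee; fun_prop
theorem ee_norm (x : ℝ) : ‖ee x‖ = 1 := by
  have : (2 * Real.pi * Complex.I * x : ℂ) = ((2 * Real.pi * x : ℝ) : ℂ) * Complex.I := by
    push_cast; ring
  rw [ee, this, Complex.norm_exp_ofReal_mul_I]
theorem ee_ne (x : ℝ) : ee x ≠ 0 := Complex.exp_ne_zero _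
theorem ee_eq_iff (x y : ℝ) : ee x = ee y ↔ ∃ m : ℤ, x = y + m := by
  unfold ee
  rw [Complex.exp_eq_exp_iff_exists_int]
  refine exists_congr fun m => ?_
  have h : (2 * Real.pi * Complex.I : ℂ) ≠ 0 := Complex.two_pi_I_ne_zero
  constructor
  · intro e
    have : (2 * Real.pi * Complex.I : ℂ) * x = (2 * Real.pi * Complex.I : ℂ) * (y + m) := by
      rw [e]; ring
    exact_mod_cast mul_left_cancel₀ h this
  · intro e
    subst e
    push_cast; ring
theorem ee_add_int (x : ℝ) (m : ℤ) : ee (x + m) = ee x := (ee_eq_iff _ _).mpr ⟨m, rfl⟩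
theorem ee_int (m : ℤ) : ee m = 1 := by
  have := ee_add_int 0 m
  rw [zero_add] at this
  rw [this]; simp [ee]
theorem ee_nat (m : ℕ) : ee m = 1 := by exact_mod_cast ee_int m
theorem ee_half (x : ℝ) : ee (x + 1 / 2) = - ee x := by
  unfold ee
  have : (2 * Real.pi * Complex.I * ((x + 1 / 2 : ℝ) : ℂ) : ℂ) =
      2 * Real.pi * Complex.I * x + Real.pi * Complex.I := by push_cast; ring
  rw [this, Complex.exp_add, Complex.exp_pi_mul_I]; ring
theorem polyBP_eq (N k : ℕ) (t : ℝ) : polyBP N k t = ee ((k + t) / N) := by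
  unfold polyBP ee; push_cast; rfl

/-- polar coordinates on the disc. -/
def kap (p : I × I) : Disc := ⟨(p.2 : ℝ) * ee p.1, by
  rw [norm_mul, ee_norm, mul_one, Complex.norm_real, Real.norm_eq_abs, abs_of_nonneg p.2.2.1]
  exact p.2.2.2⟩

theorem kap_val (p : I × I) : (kap p : ℂ) = (p.2 : ℝ) * ee p.1 := rfl

theorem kap_cont : Continuous kap := by
  refine Continuous.subtype_mk ?_ _
  have := ee_cont
  fun_prop

theorem kap_norm (p : I × I) : ‖(kap p : ℂ)‖ = p.2 := by
  rw [kap_val, norm_mul, ee_norm, mul_one, Complex.norm_real, Real.norm_eq_abs,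
    abs_of_nonneg p.2.2.1]

theorem kap_surj : Function.Surjective kap := by
  intro z
  obtain ⟨θ, hθ⟩ : ∃ θ : ℝ, (z : ℂ) = ‖(z : ℂ)‖ * ee θ := by
    refine ⟨Complex.arg z / (2 * Real.pi), ?_⟩
    have : (2 * Real.pi * Complex.I * ((Complex.arg z / (2 * Real.pi) : ℝ) : ℂ)) =
        Complex.arg z * Complex.I := by
      have := Real.pi_ne_zero
      push_cast
      field_simp
    rw [ee, this, Complex.norm_mul_exp_arg_mul_I]
  refine ⟨(⟨Int.fract θ, Int.fract_nonneg _, (Int.fract_lt_one _).le⟩,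
    ⟨‖(z : ℂ)‖, norm_nonneg _, z.2⟩), ?_⟩
  apply Subtype.ext
  rw [kap_val]
  simp only
  rw [hθ, norm_mul, ee_norm, mul_one]
  simp only [norm_norm, Complex.norm_real]
  congr 1
  rw [ee_eq_iff]
  exact ⟨-⌊θ⌋, by rw [Int.fract]; push_cast; ring⟩

instance : CompactSpace Disc := by
  have : CompactSpace (Set.range kap) := isCompact_iff_compactSpace.mp (isCompact_range kap_cont)
  have h2 : IsCompact (Set.univ : Set Disc) := by
    rw [← kap_surj.range_eq]; exact isCompact_range kap_cont
  exact ⟨h2⟩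

theorem kap_quot : Topology.IsQuotientMap kap :=
  (Topology.IsQuotientMap.of_surjective_continuous kap_surj kap_cont)

theorem kap_eq {p q : I × I} (h : kap p = kap q) : p.2 = q.2 ∧
    ((p.2 : ℝ) = 0 ∨ p.1 = q.1 ∨ (p.1 = 0 ∧ q.1 = 1) ∨ (p.1 = 1 ∧ q.1 = 0)) := by
  have h1 : p.2 = q.2 := by
    apply Subtype.ext
    rw [← kap_norm, ← kap_norm, h]
  refine ⟨h1, ?_⟩
  by_cases h0 : (p.2 : ℝ) = 0
  · exact Or.inl h0
  right
  have h2 := congrArg Subtype.val h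
  rw [kap_val, kap_val, ← h1] at h2
  have h3 := mul_left_cancel₀ (by exact_mod_cast h0) h2
  rw [ee_eq_iff] at h3
  obtain ⟨m, hm⟩ := h3
  have a1 := p.1.2.1
  have a2 := p.1.2.2
  have a3 := q.1.2.1
  have a4 := q.1.2.2
  have m1 : (-1 : ℝ) ≤ m := by linarith
  have m2 : (m : ℝ) ≤ 1 := by linarith
  have m3 : (-1 : ℤ) ≤ m := by exact_mod_cast m1
  have m4 : m ≤ 1 := by exact_mod_cast m2
  obtain rfl | rfl | rfl : m = -1 ∨ m = 0 ∨ m = 1 := by omega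
  · right; left
    push_cast at hm
    exact ⟨Subtype.ext (by rw [Set.Icc.coe_zero]; linarith), Subtype.ext (by rw [Set.Icc.coe_one]; linarith)⟩
  · left
    exact Subtype.ext (by simpa using hm)
  · right; right
    push_cast at hm
    exact ⟨Subtype.ext (by rw [Set.Icc.coe_one]; linarith), Subtype.ext (by rw [Set.Icc.coe_zero]; linarith)⟩

theorem disc_desc {Z : Type*} [TopologicalSpace Z] (f : C(I × I, Z))
    (h0 : ∀ a a', f (a, 0) = f (a', 0)) (h1 : ∀ b, f (0, b) = f (1, b)) :
    ∃ F : C(Disc, Z), ∀ p, F (kap p) = f p := by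
  have hf : ∀ p q, kap p = kap q → f p = f q := by
    rintro ⟨a, b⟩ ⟨a', b'⟩ h
    obtain ⟨e1, e2⟩ := kap_eq h
    simp only at e1 e2
    subst e1
    rcases e2 with e | e | ⟨e, e'⟩ | ⟨e, e'⟩
    · have : b = 0 := Subtype.ext e
      subst this
      exact h0 _ _
    · rw [e]
    · rw [e, e', h1]
    · rw [e, e', h1]
  let kq : C(I × I, Disc) := ⟨kap, kap_cont⟩
  have hq : Topology.IsQuotientMap kq := kap_quot
  refine ⟨hq.lift f (fun p q h => hf p q h), fun p => ?_⟩
  exact DFunLike.congr_fun (hq.lift_comp f (fun p q h => hf p q h)) p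

/-- the class of a point of the disc -/
def ngmk (g : ℕ) (z : Disc) : Ng g := Quot.mk _ z

theorem ngmk_quot (g : ℕ) : Topology.IsQuotientMap (ngmk g) := isQuotientMap_quot_mk
theorem ngmk_cont (g : ℕ) : Continuous (ngmk g) := (ngmk_quot g).continuous
theorem ngmk_surj (g : ℕ) : Function.Surjective (ngmk g) := (ngmk_quot g).surjective

theorem ng_lift {Z : Type*} [TopologicalSpace Z] (g : ℕ) (F : C(Disc, Z))
    (h : ∀ z w, nonorientRel g z w → F z = F w) :
    ∃ G : C(Ng g, Z), ∀ z, G (ngmk g z) = F z :=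
  ⟨⟨Quot.lift F h, continuous_quot_lift h F.continuous⟩, fun _ => rfl⟩

theorem rel_kap (g : ℕ) (hg : 1 ≤ g) {z w : Disc} (h : nonorientRel g z w) :
    ∃ (j : ℕ) (a a' : I), j < g ∧ 2 * j ≤ 2 * g * (a : ℝ) ∧ 2 * g * (a : ℝ) ≤ 2 * j + 1 ∧
      2 * g * (a' : ℝ) = 2 * g * (a : ℝ) + 1 ∧ z = kap (a, 1) ∧ w = kap (a', 1) := by
  obtain ⟨j, t, h0, h1, hz, hw⟩ := h
  have hg' : (0 : ℝ) < 2 * g := by positivity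
  have hj : ((j : ℕ) : ℝ) + 1 ≤ g := by exact_mod_cast j.2
  have hj0 : (0 : ℝ) ≤ ((j : ℕ) : ℝ) := by positivity
  refine ⟨j, ⟨(2 * (j : ℕ) + t) / (2 * g), by positivity, ?_⟩,
    ⟨(2 * (j : ℕ) + 1 + t) / (2 * g), by positivity, ?_⟩, j.2, ?_, ?_, ?_, ?_, ?_⟩
  · rw [div_le_one hg']; linarith
  · rw [div_le_one hg']; linarith
  · simp only
    rw [mul_div_cancel₀ _ hg'.ne']; linarith
  · simp only
    rw [mul_div_cancel₀ _ hg'.ne']; linarith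
  · simp only
    rw [mul_div_cancel₀ _ hg'.ne', mul_div_cancel₀ _ hg'.ne']; ring
  · apply Subtype.ext
    rw [hz, kap_val, polyBP_eq]; simp
  · apply Subtype.ext
    rw [hw, kap_val, polyBP_eq]; simp

theorem kap_rel (g : ℕ) (hg : 1 ≤ g) (j : ℕ) (a a' : I) (hj : j < g)
    (h1 : 2 * j ≤ 2 * g * (a : ℝ)) (h2 : 2 * g * (a : ℝ) ≤ 2 * j + 1)
    (h3 : 2 * g * (a' : ℝ) = 2 * g * (a : ℝ) + 1) :
    ngmk g (kap (a, 1)) = ngmk g (kap (a', 1)) := by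
  have hg' : (0 : ℝ) < 2 * g := by positivity
  refine Quot.sound ⟨⟨j, hj⟩, 2 * g * a - 2 * j, by linarith, by linarith, ?_, ?_⟩
  · rw [kap_val, polyBP_eq]
    simp only [Set.Icc.coe_one, Complex.ofReal_one, one_mul]
    congr 1
    push_cast
    field_simp
    ring
  · rw [kap_val, polyBP_eq]
    simp only [Set.Icc.coe_one, Complex.ofReal_one, one_mul]
    congr 1
    rw [eq_div_iff (by positivity)]
    push_cast
    linarith

theorem ng_desc {Z : Type*} [TopologicalSpace Z] (g : ℕ) (hg : 1 ≤ g) (f : C(I × I, Z))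
    (h0 : ∀ a a', f (a, 0) = f (a', 0)) (h1 : ∀ b, f (0, b) = f (1, b))
    (hr : ∀ (j : ℕ) (a a' : I), j < g → 2 * j ≤ 2 * g * (a : ℝ) → 2 * g * (a : ℝ) ≤ 2 * j + 1 →
      2 * g * (a' : ℝ) = 2 * g * (a : ℝ) + 1 → f (a, 1) = f (a', 1)) :
    ∃ G : C(Ng g, Z), ∀ p, G (ngmk g (kap p)) = f p := by
  obtain ⟨F, hF⟩ := disc_desc f h0 h1
  obtain ⟨G, hG⟩ := ng_lift g F (by
    intro z w h
    obtain ⟨j, a, a', h1, h2, h3, h4, rfl, rfl⟩ := rel_kap g hg h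
    rw [hF, hF]
    exact hr j a a' h1 h2 h3 h4)
  exact ⟨G, fun p => by rw [hG, hF]⟩

instance (g : ℕ) : CompactSpace (Ng g) := by
  have : CompactSpace (Quot (nonorientRel g)) := inferInstance
  exact this

end LSNg

/-! ### Hausdorff property -/
namespace LSNg

/-- clamp a real number to the interval `[2j, 2j+2]`. -/
def clp (j : ℕ) (x : ℝ) : ℝ := max (2 * j) (min x (2 * j + 2))

theorem clp_cont (j : ℕ) : Continuous (clp j) := by unfold clp; fun_prop

theorem clp_lo (j : ℕ) (x : ℝ) (h : x ≤ 2 * j) : clp j x = (2 * j : ℕ) := by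
  unfold clp; push_cast
  rw [max_eq_left]; exact min_le_of_left_le h

theorem clp_hi (j : ℕ) (x : ℝ) (h : 2 * j + 2 ≤ x) : clp j x = (2 * j + 2 : ℕ) := by
  unfold clp; push_cast
  rw [min_eq_right h, max_eq_right]; linarith

theorem clp_mid (j : ℕ) (x : ℝ) (h : 2 * j ≤ x) (h' : x ≤ 2 * j + 2) : clp j x = x := by
  unfold clp
  rw [min_eq_left h', max_eq_right h]

theorem ee_clp_nat (j m : ℕ) : ee (clp j m) = 1 := by
  by_cases h1 : m ≤ 2 * j
  · rw [clp_lo j m (by exact_mod_cast h1), ee_nat]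
  · by_cases h2 : 2 * j + 2 ≤ m
    · rw [clp_hi j m (by exact_mod_cast h2), ee_nat]
    · rw [clp_mid, ee_nat]
      · push Not at h1; exact_mod_cast h1.le
      · push Not at h2; exact_mod_cast h2.le

/-- Separating functions for the surface. -/
def sepf (g : ℕ) (p : I × I) : ℝ × ℂ × (Fin g → ℂ) :=
  ((p.2 : ℝ), ((1 - (p.2 : ℝ)) * (p.2 : ℝ) : ℝ) * ee p.1,
    fun j => ((p.2 : ℝ) : ℂ) * (ee (clp j (2 * g * (p.1 : ℝ))) - 1))

theorem sepf_cont (g : ℕ) : Continuous (sepf g) := by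
  unfold sepf
  have h1 := ee_cont
  have h2 := clp_cont
  fun_prop

theorem vertex_eq (g : ℕ) (hg : 1 ≤ g) (m : ℕ) (a : I) (h : 2 * g * (a : ℝ) = m) :
    ngmk g (kap (a, 1)) = ngmk g (kap (0, 1)) := by
  have hg' : (0 : ℝ) < 2 * g := by positivity
  induction m generalizing a with
  | zero =>
    have : a = 0 := by
      apply Subtype.ext
      have : (2 * (g : ℝ)) * (a : ℝ) = 0 := by exact_mod_cast h
      simpa [hg'.ne'] using this
    rw [this]
  | succ m ih =>
    have ha1 := a.2.2
    have hm : ((m : ℝ) + 1) ≤ 2 * g := by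
      have : 2 * g * (a : ℝ) ≤ 2 * g := by nlinarith
      rw [h] at this; push_cast at this; linarith
    let b : I := ⟨m / (2 * g), by positivity, by rw [div_le_one hg']; linarith⟩
    have hb : 2 * g * (b : ℝ) = m := by
      simp only [b]; rw [mul_div_cancel₀ _ hg'.ne']
    rw [← ih b hb]
    symm
    have hmg : m + 1 ≤ 2 * g := by exact_mod_cast hm
    refine kap_rel g hg (m / 2) b a (by omega) ?_ ?_ ?_
    · rw [hb]
      have : 2 * (m / 2) ≤ m := by omega
      exact_mod_cast this
    · rw [hb]
      have : m ≤ 2 * (m / 2) + 1 := by omega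
      exact_mod_cast this
    · rw [hb, h]; push_cast; ring

theorem sepf_aux (g : ℕ) (a a' : I) (j : Fin g)
    (h1 : 2 * (j : ℕ) ≤ 2 * g * (a : ℝ)) (h2 : 2 * g * (a : ℝ) ≤ 2 * (j : ℕ) + 2)
    (hne : ee (2 * g * (a : ℝ)) ≠ 1)
    (he : ee (clp j (2 * g * (a : ℝ))) = ee (clp j (2 * g * (a' : ℝ)))) :
    (2 * (j : ℕ) ≤ 2 * g * (a' : ℝ) ∧ 2 * g * (a' : ℝ) ≤ 2 * (j : ℕ) + 2) ∧
    ee (2 * g * (a : ℝ)) = ee (2 * g * (a' : ℝ)) := by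
  rw [clp_mid _ _ h1 h2] at he
  by_cases h3 : 2 * g * (a' : ℝ) ≤ 2 * (j : ℕ)
  · rw [clp_lo _ _ h3, ee_nat] at he; exact absurd he hne
  · by_cases h4 : 2 * (j : ℕ) + 2 ≤ 2 * g * (a' : ℝ)
    · rw [clp_hi _ _ h4, ee_nat] at he; exact absurd he hne
    · push Not at h3 h4
      rw [clp_mid _ _ h3.le h4.le] at he
      exact ⟨⟨h3.le, h4.le⟩, he⟩

theorem exists_floor (g : ℕ) (hg : 1 ≤ g) (a : I) :
    ∃ j : Fin g, 2 * (j : ℕ) ≤ 2 * g * (a : ℝ) ∧ 2 * g * (a : ℝ) ≤ 2 * (j : ℕ) + 2 := by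
  have h0 := a.2.1
  have h1 := a.2.2
  have hg' : (0 : ℝ) < g := by positivity
  by_cases h : (a : ℝ) = 1
  · refine ⟨⟨g - 1, by omega⟩, ?_, ?_⟩
    · rw [h]; simp only; rw [Nat.cast_sub hg]; push_cast; linarith
    · rw [h]; simp only; rw [Nat.cast_sub hg]; push_cast; linarith
  · have h2 : (a : ℝ) < 1 := lt_of_le_of_ne h1 h
    have h3 : (0 : ℝ) ≤ g * a := by positivity
    refine ⟨⟨⌊(g : ℝ) * a⌋₊, ?_⟩, ?_, ?_⟩
    · rw [Nat.floor_lt h3]; nlinarith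
    · have := Nat.floor_le h3; simp only; linarith
    · have := Nat.lt_floor_add_one ((g : ℝ) * a); simp only; linarith

theorem sepf_inj (g : ℕ) (hg : 1 ≤ g) (p q : I × I) (h : sepf g p = sepf g q) :
    ngmk g (kap p) = ngmk g (kap q) := by
  obtain ⟨a, b⟩ := p
  obtain ⟨a', b'⟩ := q
  simp only [sepf, Prod.mk.injEq] at h
  obtain ⟨e1, e2, e3⟩ := h
  have e1 : b = b' := Subtype.ext e1
  subst e1
  by_cases hb : b = 1
  · subst hb
    simp only [Set.Icc.coe_one, Complex.ofReal_one, one_mul, funext_iff, sub_left_inj] at e3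
    have main : ∀ a a' : I, (∀ j : Fin g, ee (clp j (2 * g * (a : ℝ))) =
        ee (clp j (2 * g * (a' : ℝ)))) → ee (2 * g * (a : ℝ)) ≠ 1 → (a : ℝ) ≤ a' →
        ngmk g (kap (a, 1)) = ngmk g (kap (a', 1)) := by
      intro a a' e3 hne hle
      obtain ⟨j, h1, h2⟩ := exists_floor g hg a
      obtain ⟨⟨h3, h4⟩, h5⟩ := sepf_aux g a a' j h1 h2 hne (e3 j)
      have h1' : 2 * (j : ℕ) < 2 * g * (a : ℝ) := by
        refine lt_of_le_of_ne h1 fun e => hne ?_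
        rw [← e]; exact_mod_cast ee_nat (2 * j)
      have h4' : 2 * g * (a' : ℝ) < 2 * (j : ℕ) + 2 := by
        refine lt_of_le_of_ne h4 fun e => hne ?_
        rw [h5, e]; exact_mod_cast ee_nat (2 * j + 2)
      rw [ee_eq_iff] at h5
      obtain ⟨m, hm⟩ := h5
      have hg' : (0 : ℝ) < 2 * g := by positivity
      have hle' : 2 * g * (a : ℝ) ≤ 2 * g * (a' : ℝ) := by nlinarith
      have m1 : (m : ℝ) ≤ 0 := by linarith
      have m2 : (-2 : ℝ) < m := by linarith
      have m1' : m ≤ 0 := by exact_mod_cast m1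
      have m2' : -2 < m := by exact_mod_cast m2
      obtain rfl | rfl : m = -1 ∨ m = 0 := by omega
      · push_cast at hm
        exact kap_rel g hg j a a' j.2 h1 (by linarith) (by linarith)
      · push_cast at hm
        have : a = a' := by
          apply Subtype.ext
          have : (2 * (g : ℝ)) * (a : ℝ) = (2 * (g : ℝ)) * (a' : ℝ) := by linarith
          exact mul_left_cancel₀ hg'.ne' this
        rw [this]
    have vert : ∀ a : I, ee (2 * g * (a : ℝ)) = 1 →
        ngmk g (kap (a, 1)) = ngmk g (kap (0, 1)) := by
      intro a ha
      have h1 : ee (2 * g * (a : ℝ)) = ee 0 := by rw [ha]; exact_mod_cast (ee_nat 0).symm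
      rw [ee_eq_iff] at h1
      obtain ⟨m, hm⟩ := h1
      rw [zero_add] at hm
      have h0 : (0 : ℝ) ≤ 2 * g * (a : ℝ) := by have := a.2.1; positivity
      rw [hm] at h0
      have h0 : 0 ≤ m := by exact_mod_cast h0
      lift m to ℕ using h0
      exact vertex_eq g hg m a (by exact_mod_cast hm)
    have ntv : ∀ a a' : I, (∀ j : Fin g, ee (clp j (2 * g * (a : ℝ))) =
        ee (clp j (2 * g * (a' : ℝ)))) → ee (2 * g * (a : ℝ)) ≠ 1 → ee (2 * g * (a' : ℝ)) ≠ 1 := by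
      intro a a' e3 hne
      obtain ⟨j, h1, h2⟩ := exists_floor g hg a
      rw [← (sepf_aux g a a' j h1 h2 hne (e3 j)).2]
      exact hne
    by_cases hv : ee (2 * g * (a : ℝ)) = 1
    · have hv' : ee (2 * g * (a' : ℝ)) = 1 := by
        by_contra hne
        exact ntv a' a (fun j => (e3 j).symm) hne hv
      rw [vert a hv, vert a' hv']
    · rcases le_total (a : ℝ) a' with hle | hle
      · exact main a a' e3 hv hle
      · exact (main a' a (fun j => (e3 j).symm) (ntv a a' e3 hv) hle).symm
  · congr 1
    apply Subtype.ext
    rw [kap_val, kap_val]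
    simp only at e2 ⊢
    have hb' : ((1 - (b : ℝ) : ℝ) : ℂ) ≠ 0 := by
      rw [Complex.ofReal_ne_zero, sub_ne_zero]
      intro e; exact hb (Subtype.ext e.symm)
    rw [Complex.ofReal_mul, mul_assoc, mul_assoc] at e2
    exact mul_left_cancel₀ hb' e2

theorem ng_t2 (g : ℕ) (hg : 1 ≤ g) : T2Space (Ng g) := by
  obtain ⟨G, hG⟩ := ng_desc g hg ⟨sepf g, sepf_cont g⟩ (by intro a a'; simp [sepf]) (by
    intro b
    simp only [ContinuousMap.coe_mk, sepf, Set.Icc.coe_zero, Set.Icc.coe_one, mul_zero, mul_one]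
    have e0 : ee 0 = 1 := by exact_mod_cast ee_nat 0
    have e1 : ee 1 = 1 := by exact_mod_cast ee_nat 1
    have e2 : ∀ j : ℕ, ee (clp j 0) = 1 := fun j => by exact_mod_cast ee_clp_nat j 0
    have e3 : ∀ j : ℕ, ee (clp j (2 * g)) = 1 := fun j => by exact_mod_cast ee_clp_nat j (2 * g)
    simp only [e0, e1, e2, e3]) (by
    intro j a a' hj h1 h2 h3
    simp only [ContinuousMap.coe_mk, sepf, Set.Icc.coe_one]
    have : ∀ i : ℕ, ee (clp i (2 * g * (a : ℝ))) = ee (clp i (2 * g * (a' : ℝ))) := by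
      intro i
      rcases lt_trichotomy i j with hij | rfl | hij
      · have : ((i : ℝ) + 1) ≤ j := by exact_mod_cast hij
        rw [clp_hi i _ (by linarith), clp_hi i _ (by linarith)]
      · rw [clp_mid i _ (by linarith) (by linarith), clp_mid i _ (by linarith) (by linarith), h3,
          ee_eq_iff]
        exact ⟨-1, by push_cast; ring⟩
      · have : ((j : ℝ) + 1) ≤ i := by exact_mod_cast hij
        rw [clp_lo i _ (by linarith), clp_lo i _ (by linarith)]
    simp [this])
  refine T2Space.of_injective_continuous (f := G) ?_ G.continuous
  intro x y hxy
  obtain ⟨z, rfl⟩ := ngmk_surj g x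
  obtain ⟨w, rfl⟩ := ngmk_surj g y
  obtain ⟨p, rfl⟩ := kap_surj z
  obtain ⟨q, rfl⟩ := kap_surj w
  rw [hG, hG] at hxy
  exact sepf_inj g hg p q hxy

/-! symmetric products -/

section
variable {X : Type*} [TopologicalSpace X] (n : ℕ)

/-- class of a tuple -/
def spmk (s : Fin n → X) : SP n X := Quot.mk _ s

theorem spRel_equiv : Equivalence (spRel n X) where
  refl s := ⟨1, rfl⟩
  symm := by
    rintro s t ⟨e, rfl⟩
    exact ⟨e⁻¹, by ext i; simp⟩
  trans := by
    rintro s t u ⟨e, rfl⟩ ⟨f, rfl⟩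
    exact ⟨e * f, by ext i; simp⟩

theorem spmk_eq_iff (s t : Fin n → X) : spmk n s = spmk n t ↔ spRel n X s t := by
  unfold spmk
  exact ⟨fun h => (spRel_equiv n).quot_mk_eq_iff s t |>.mp h, fun h => Quot.sound h⟩

theorem spmk_quot : Topology.IsQuotientMap (spmk n : (Fin n → X) → SP n X) :=
  isQuotientMap_quot_mk

theorem spmk_open : IsOpenQuotientMap (spmk n : (Fin n → X) → SP n X) := by
  refine ⟨(spmk_quot n).surjective, (spmk_quot n).continuous, ?_⟩
  intro U hU
  rw [← (spmk_quot n).isOpen_preimage]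
  have : spmk n ⁻¹' (spmk n '' U) = ⋃ e : Equiv.Perm (Fin n), (fun s : Fin n → X => s ∘ e) ⁻¹' U := by
    ext t
    simp only [Set.mem_preimage, Set.mem_image, Set.mem_iUnion]
    constructor
    · rintro ⟨s, hs, h⟩
      obtain ⟨e, he⟩ := (spmk_eq_iff n t s).mp h.symm
      exact ⟨e, he ▸ hs⟩
    · rintro ⟨e, he⟩
      exact ⟨t ∘ e, he, ((spmk_eq_iff n t _).mpr ⟨e, rfl⟩).symm⟩
  rw [this]
  refine isOpen_iUnion fun e => hU.preimage ?_
  exact continuous_pi fun i => continuous_apply _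

theorem sp_t2 [T2Space X] : T2Space (SP n X) := by
  rw [t2Space_iff_of_isOpenQuotientMap (spmk_open n)]
  have : {q : (Fin n → X) × (Fin n → X) | spmk n q.1 = spmk n q.2} =
      ⋃ e : Equiv.Perm (Fin n), {q | q.1 ∘ e = q.2} := by
    ext q
    simp only [Set.mem_setOf_eq, Set.mem_iUnion, spmk_eq_iff]
    rfl
  rw [this]
  refine isClosed_iUnion_of_finite fun e => isClosed_eq ?_ continuous_snd
  exact continuous_pi fun i => (continuous_apply _).comp continuous_fst

theorem sp_compact [CompactSpace X] : CompactSpace (SP n X) := by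
  have : CompactSpace (Quot (spRel n X)) := inferInstance
  exact this
end

end LSNg

/-! ### The double covering -/
namespace LSNg

/-- nonzero functions. -/
def WW : Type := {f : ℝ → ℝ // f ≠ 0}
instance : TopologicalSpace WW := inferInstanceAs (TopologicalSpace {f : ℝ → ℝ // f ≠ 0})

/-- tensor squares of nonzero functions -/
def EE : Type := {F : ℝ × ℝ → ℝ // ∃ f : WW, F = fun x => f.1 x.1 * f.1 x.2}
instance : TopologicalSpace EE :=
  inferInstanceAs (TopologicalSpace {F : ℝ × ℝ → ℝ // ∃ f : WW, F = fun x => f.1 x.1 * f.1 x.2})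

/-- the double covering -/
def pp (f : WW) : EE := ⟨fun x => f.1 x.1 * f.1 x.2, f, rfl⟩

theorem WW.ev_cont (t : ℝ) : Continuous (fun f : WW => f.1 t) :=
  (continuous_apply t).comp continuous_subtype_val

theorem EE.ev_cont (x : ℝ × ℝ) : Continuous (fun f : EE => f.1 x) :=
  (continuous_apply x).comp continuous_subtype_val

theorem pp_cont : Continuous pp := by
  refine Continuous.subtype_mk (continuous_pi fun x => ?_) _
  exact (WW.ev_cont _).mul (WW.ev_cont _)

instance : SMul ℤˣ WW where
  smul e f := ⟨fun t => ((e : ℤ) : ℝ) * f.1 t, by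
    intro h
    apply f.2
    ext t
    have := congrFun h t
    rcases Int.units_eq_one_or e with rfl | rfl <;> simpa using this⟩

theorem smul_val (e : ℤˣ) (f : WW) (t : ℝ) : (e • f).1 t = ((e : ℤ) : ℝ) * f.1 t := rfl

theorem WW.ext' {f h : WW} (e : ∀ t, f.1 t = h.1 t) : f = h := Subtype.ext (funext e)

instance : MulAction ℤˣ WW where
  one_smul f := by
    apply WW.ext'; intro t; rw [smul_val]; simp
  mul_smul a b f := by
    apply WW.ext'; intro t; simp only [smul_val]; push_cast; ring

theorem WW.exists_ne (f : WW) : ∃ t, f.1 t ≠ 0 := Function.ne_iff.mp f.2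

theorem pp_eq {f h : WW} (e : pp f = pp h) : ∃ s : ℤˣ, s • h = f := by
  have e' : ∀ x y, f.1 x * f.1 y = h.1 x * h.1 y := fun x y =>
    congrFun (congrArg Subtype.val e) (x, y)
  obtain ⟨t, ht⟩ := f.exists_ne
  have h1 := e' t t
  rcases mul_self_eq_mul_self_iff.mp h1 with h2 | h2
  · refine ⟨1, ?_⟩
    rw [one_smul]
    apply WW.ext'
    intro x
    have := e' x t
    rw [← h2] at this
    exact (mul_right_cancel₀ ht this).symm
  · refine ⟨-1, ?_⟩
    apply WW.ext'
    intro x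
    have := e' x t
    rw [smul_val]
    have h3 : h.1 t = - f.1 t := by rw [h2]; ring
    rw [h3] at this
    have h4 : f.1 x * f.1 t = (- h.1 x) * f.1 t := by rw [this]; ring
    rw [mul_right_cancel₀ ht h4]
    simp

theorem pp_smul (s : ℤˣ) (h : WW) : pp (s • h) = pp h := by
  apply Subtype.ext
  ext ⟨x, y⟩
  simp only [pp, smul_val]
  rcases Int.units_eq_one_or s with rfl | rfl <;> simp

theorem pp_surj : Function.Surjective pp := by
  rintro ⟨F, f, rfl⟩
  exact ⟨f, rfl⟩

theorem pp_quot : Topology.IsQuotientMap pp := by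
  refine ⟨Topology.IsCoinducing.of_isOpen_preimage_iff_isOpen fun s =>
    ⟨?_, fun h => h.preimage pp_cont⟩, pp_surj⟩
  intro hs
  rw [isOpen_iff_mem_nhds]
  intro F hF
  obtain ⟨f, rfl⟩ := pp_surj F
  obtain ⟨t, ht⟩ := f.exists_ne
  let O : Set EE := {F | 0 < F.1 (t, t)}
  have hO : IsOpen O := isOpen_lt continuous_const (EE.ev_cont _)
  have hfO : pp f ∈ O := by
    show 0 < f.1 t * f.1 t
    exact mul_self_pos.mpr ht
  let sec : O → WW := fun F => ⟨fun x => F.1.1 (x, t) / Real.sqrt (F.1.1 (t, t)), by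
    intro h
    have := congrFun h t
    have h2 : 0 < F.1.1 (t, t) := F.2
    have h3 := Real.sqrt_pos.mpr h2
    have h4 : 0 < F.1.1 (t, t) / Real.sqrt (F.1.1 (t, t)) := div_pos h2 h3
    exact h4.ne' this⟩
  have hsec : Continuous sec := by
    refine Continuous.subtype_mk (continuous_pi fun x => ?_) _
    refine Continuous.div₀ ((EE.ev_cont _).comp continuous_subtype_val)
      (Real.continuous_sqrt.comp ((EE.ev_cont _).comp continuous_subtype_val)) ?_
    intro F
    exact (Real.sqrt_pos.mpr F.2).ne'
  have hpsec : ∀ F : O, pp (sec F) = F.1 := by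
    intro F
    apply Subtype.ext
    ext ⟨x, y⟩
    obtain ⟨⟨F, h, rfl⟩, hF⟩ := F
    have h2 : 0 < h.1 t * h.1 t := hF
    show h.1 x * h.1 t / Real.sqrt (h.1 t * h.1 t) * (h.1 y * h.1 t / Real.sqrt (h.1 t * h.1 t)) =
      h.1 x * h.1 y
    have h3 := Real.mul_self_sqrt h2.le
    have h4 := (Real.sqrt_pos.mpr h2).ne'
    have h5 : h.1 t ≠ 0 := by
      intro e
      rw [e] at h2
      simp at h2
    rw [div_mul_div_comm, h3]
    field_simp
  have h1 : IsOpen (Subtype.val '' (sec ⁻¹' (pp ⁻¹' s))) :=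
    hO.isOpenMap_subtype_val _ (hs.preimage hsec)
  refine Filter.mem_of_superset (h1.mem_nhds ?_) ?_
  · refine ⟨⟨pp f, hfO⟩, ?_, rfl⟩
    show pp (sec _) ∈ s
    rw [hpsec]; exact hF
  · rintro _ ⟨F, hF, rfl⟩
    have : pp (sec F) ∈ s := hF
    rwa [hpsec] at this

theorem pp_cov : IsCoveringMap pp := by
  have : IsQuotientCoveringMap pp ℤˣ := by
    refine { pp_quot with continuous_const_smul := ?_, apply_eq_iff_mem_orbit := ?_, disjoint := ?_ }
    · intro e
      refine Continuous.subtype_mk (continuous_pi fun x => ?_) _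
      exact continuous_const.mul (WW.ev_cont _)
    · intro f h
      constructor
      · intro e
        obtain ⟨s, hs⟩ := pp_eq e
        exact ⟨s, hs⟩
      · rintro ⟨s, rfl⟩
        exact pp_smul s h
    · intro f
      obtain ⟨t, ht⟩ := f.exists_ne
      refine ⟨{h | 0 < h.1 t * f.1 t}, ?_, ?_⟩
      · refine (isOpen_lt continuous_const ((WW.ev_cont t).mul continuous_const)).mem_nhds ?_
        exact mul_self_pos.mpr ht
      · rintro s ⟨_, ⟨h, hh, rfl⟩, h2⟩
        rcases Int.units_eq_one_or s with rfl | rfl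
        · rfl
        · exfalso
          have h1 : 0 < h.1 t * f.1 t := hh
          have h2 : 0 < ((-1 : ℤˣ) • h).1 t * f.1 t := h2
          rw [smul_val] at h2
          simp at h2
          linarith
  exact this.isCoveringMap

/-- The sign functions on the members of a categorical cover. -/
theorem sign_fun {Y Q : Type*} [TopologicalSpace Y] [TopologicalSpace Q]
    (c : C(Y, EE)) (q : C(Q, Y)) (Phi : C(Q, WW)) (hc : ∀ y, c (q y) = pp (Phi y))
    (U : Set Y) (hU : (inclMap U).Nullhomotopic) :
    ∃ h : (q ⁻¹' U) → ℝ, Continuous h ∧ (∀ y, h y ≠ 0) ∧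
      ∀ (s : ℤˣ) (y y' : q ⁻¹' U), q y = q y' → Phi y' = s • Phi y → h y' = ((s : ℤ) : ℝ) * h y := by
  obtain ⟨y0, ⟨H⟩⟩ := hU
  let A := (q ⁻¹' U)
  let qA : C(A, U) := ⟨fun a => ⟨q a.1, a.2⟩, by
    refine Continuous.subtype_mk ?_ _
    exact q.continuous.comp continuous_subtype_val⟩
  let K : C(I × A, EE) := ⟨fun x => c (H (x.1, qA x.2)), by fun_prop⟩
  let f : C(A, WW) := ⟨fun a => Phi a.1, by fun_prop⟩
  have hK0 : ∀ a, K (0, a) = pp (f a) := by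
    intro a
    show c (H (0, qA a)) = pp (Phi a.1)
    rw [H.apply_zero, ← hc]; rfl
  obtain ⟨u0, hu0⟩ := pp_surj (c y0)
  obtain ⟨t, ht⟩ := u0.exists_ne
  have key : ∀ (s : ℤˣ) (y y' : A), q y = q y' → Phi y' = s • Phi y →
      (pp_cov.liftHomotopy K f hK0 (1, y')) = s • (pp_cov.liftHomotopy K f hK0 (1, y)) := by
    intro s y y' hq hP
    have hqA : qA y = qA y' := Subtype.ext hq
    have hsc : Continuous (fun w : WW => s • w) := by
      refine Continuous.subtype_mk (continuous_pi fun x => ?_) _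
      exact continuous_const.mul (WW.ev_cont _)
    let Γ : C(I, WW) := ⟨fun t => pp_cov.liftHomotopy K f hK0 (t, y'), by fun_prop⟩
    let Γ' : C(I, WW) := ⟨fun t => s • pp_cov.liftHomotopy K f hK0 (t, y), by
      refine hsc.comp ?_
      fun_prop⟩
    have hl : ∀ x, pp (pp_cov.liftHomotopy K f hK0 x) = K x :=
      fun x => congrFun (pp_cov.liftHomotopy_lifts K f hK0) x
    have e : (Γ : I → WW) = Γ' := by
      refine pp_cov.eq_of_comp_eq Γ.continuous Γ'.continuous ?_ 0 ?_
      · ext1 t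
        show pp (pp_cov.liftHomotopy K f hK0 (t, y')) =
          pp (s • pp_cov.liftHomotopy K f hK0 (t, y))
        rw [pp_smul, hl, hl]
        show c (H (t, qA y')) = c (H (t, qA y))
        rw [hqA]
      · show pp_cov.liftHomotopy K f hK0 (0, y') =
          s • pp_cov.liftHomotopy K f hK0 (0, y)
        rw [pp_cov.liftHomotopy_zero, pp_cov.liftHomotopy_zero]
        exact hP
    exact congrFun e 1
  refine ⟨fun a => (pp_cov.liftHomotopy K f hK0 (1, a)).1 t, ?_, ?_, ?_⟩
  · refine (WW.ev_cont t).comp ?_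
    fun_prop
  · intro a
    have h1 : pp (pp_cov.liftHomotopy K f hK0 (1, a)) = pp u0 := by
      rw [hu0]
      have := congrFun (pp_cov.liftHomotopy_lifts K f hK0) (1, a)
      refine this.trans ?_
      show c (H (1, qA a)) = c y0
      rw [H.apply_one]; rfl
    obtain ⟨s, hs⟩ := pp_eq h1
    show (pp_cov.liftHomotopy K f hK0 (1, a)).1 t ≠ 0
    rw [← hs, smul_val]
    exact mul_ne_zero (by exact_mod_cast s.ne_zero) ht
  · intro s y y' hq hP
    simp only
    rw [key s y y' hq hP, smul_val]

end LSNg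

/-! ### The classifying map -/
namespace LSNg

/-- the complex coordinate -/
def zz (g : ℕ) (p : I × I) : ℂ := (p.2 : ℝ) * ee (min (g * (p.1 : ℝ)) 1)

theorem zz_cont (g : ℕ) : Continuous (zz g) := by
  unfold zz
  have := ee_cont
  fun_prop

/-- the local polynomial -/
def PP (g : ℕ) (p : I × I) (T : ℝ) : ℝ :=
  (zz g p).re + (zz g p).im * T + (1 - (p.2 : ℝ)) * T ^ 2

theorem PP_cont (g : ℕ) (T : ℝ) : Continuous (fun p => PP g p T) := by
  unfold PP
  have := zz_cont g
  have h1 := Complex.continuous_re.comp this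
  have h2 := Complex.continuous_im.comp this
  simp only [Function.comp_def] at h1 h2
  fun_prop

theorem PP_zero (g : ℕ) (a a' : I) (T : ℝ) : PP g (a, 0) T = PP g (a', 0) T := by
  simp [PP, zz]

theorem PP_lr (g : ℕ) (hg : 1 ≤ g) (b : I) (T : ℝ) : PP g (0, b) T = PP g (1, b) T := by
  have h : zz g (0, b) = zz g (1, b) := by
    have h1 : (1 : ℝ) ≤ g := by exact_mod_cast hg
    have h2 := ee_nat 1
    have h3 := ee_nat 0
    simp only [zz, Set.Icc.coe_zero, Set.Icc.coe_one, mul_zero, mul_one, min_eq_right h1]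
    rw [min_eq_left zero_le_one]
    push_cast at h2 h3
    rw [h2, h3]
  simp only [PP, h]

theorem PP_T0 (g : ℕ) (hg : 1 ≤ g) (a a' : I) (h1 : 2 * g * (a : ℝ) ≤ 1)
    (h2 : 2 * g * (a' : ℝ) = 2 * g * (a : ℝ) + 1) (T : ℝ) : PP g (a', 1) T = - PP g (a, 1) T := by
  have h : zz g (a', 1) = - zz g (a, 1) := by
    simp only [zz, Set.Icc.coe_one]
    rw [min_eq_left (by linarith), min_eq_left (by linarith)]
    have : (g : ℝ) * a' = g * a + 1 / 2 := by linarith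
    rw [this, ee_half]
    simp
  simp only [PP, h]
  simp
  ring

theorem PP_T1 (g : ℕ) (hg : 1 ≤ g) (j : ℕ) (hj : 1 ≤ j) (a a' : I) (h1 : 2 * j ≤ 2 * g * (a : ℝ))
    (h2 : 2 * g * (a' : ℝ) = 2 * g * (a : ℝ) + 1) (T : ℝ) : PP g (a', 1) T = PP g (a, 1) T := by
  have h : zz g (a', 1) = zz g (a, 1) := by
    have hj' : (1 : ℝ) ≤ j := by exact_mod_cast hj
    simp only [zz, Set.Icc.coe_one]
    rw [min_eq_right (by linarith), min_eq_right (by linarith)]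
  simp only [PP, h]

open Polynomial in
/-- polynomial version -/
def PPp (g : ℕ) (p : I × I) : Polynomial ℝ :=
  C (zz g p).re + C (zz g p).im * X + C (1 - (p.2 : ℝ)) * X ^ 2

theorem PPp_eval (g : ℕ) (p : I × I) (T : ℝ) : (PPp g p).eval T = PP g p T := by
  simp [PPp, PP]

theorem PPp_ne (g : ℕ) (p : I × I) : PPp g p ≠ 0 := by
  intro h
  have h0 : PP g p 0 = 0 := by rw [← PPp_eval, h]; simp
  have h1 : PP g p 1 = 0 := by rw [← PPp_eval, h]; simp
  have h2 : PP g p (-1) = 0 := by rw [← PPp_eval, h]; simp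
  simp only [PP] at h0 h1 h2
  have e1 : (p.2 : ℝ) = 1 := by linarith
  have e2 : zz g p = 0 := by
    apply Complex.ext
    · simp only [Complex.zero_re]; linarith
    · simp only [Complex.zero_im]; linarith
  simp only [zz, e1] at e2
  simp at e2
  exact ee_ne _ e2

theorem prod_PP_ne (n g : ℕ) (p : Fin n → I × I) : (fun T => ∏ k, PP g (p k) T) ≠ 0 := by
  intro h
  have h1 : (∏ k, PPp g (p k)) = 0 := by
    apply Polynomial.funext
    intro T
    rw [Polynomial.eval_prod]
    simp only [PPp_eval, Polynomial.eval_zero]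
    exact congrFun h T
  rw [Finset.prod_eq_zero_iff] at h1
  obtain ⟨k, _, hk⟩ := h1
  exact PPp_ne g _ hk

/-- product polynomial -/
def PW (n g : ℕ) (p : Fin n → I × I) : WW := ⟨fun T => ∏ k, PP g (p k) T, prod_PP_ne n g p⟩

theorem PW_cont (n g : ℕ) : Continuous (PW n g) := by
  refine Continuous.subtype_mk (continuous_pi fun T => ?_) _
  refine continuous_finsetProd _ fun k _ => ?_
  exact (PP_cont g T).comp (continuous_apply k)

theorem exists_c (n g : ℕ) (hg : 1 ≤ g) : ∃ c : C(SP n (Ng g), EE), ∀ p : Fin n → I × I,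
    c (spmk n (fun k => ngmk g (kap (p k)))) = pp (PW n g p) := by
  let f : C(I × I, ℝ × ℝ → ℝ) := ⟨fun p x => PP g p x.1 * PP g p x.2, by
    refine continuous_pi fun x => ?_
    exact (PP_cont g _).mul (PP_cont g _)⟩
  obtain ⟨G, hG⟩ := ng_desc g hg f (by
      intro a a'
      ext x
      show PP g _ _ * PP g _ _ = PP g _ _ * PP g _ _
      rw [PP_zero g a a', PP_zero g a a']) (by
      intro b
      ext x
      show PP g _ _ * PP g _ _ = PP g _ _ * PP g _ _
      rw [PP_lr g hg, PP_lr g hg]) (by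
      intro j a a' hj h1 h2 h3
      ext x
      show PP g _ _ * PP g _ _ = PP g _ _ * PP g _ _
      rcases Nat.eq_zero_or_pos j with rfl | hj0
      · rw [PP_T0 g hg a a' (by simpa using h2) h3, PP_T0 g hg a a' (by simpa using h2) h3]
        ring
      · rw [PP_T1 g hg j hj0 a a' h1 h3, PP_T1 g hg j hj0 a a' h1 h3])
  have hGf : ∀ p x, G (ngmk g (kap p)) x = PP g p x.1 * PP g p x.2 := fun p x =>
    congrFun (hG p) x
  let m : (Fin n → Ng g) → (ℝ × ℝ → ℝ) := fun s x => ∏ k, G (s k) x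
  have hm : Continuous m := by
    refine continuous_pi fun x => continuous_finsetProd _ fun k _ => ?_
    exact (continuous_apply x).comp (G.continuous.comp (continuous_apply k))
  have hmv : ∀ p : Fin n → I × I, m (fun k => ngmk g (kap (p k))) = (pp (PW n g p)).1 := by
    intro p
    ext x
    show ∏ k, G (ngmk g (kap (p k))) x = (∏ k, PP g (p k) x.1) * ∏ k, PP g (p k) x.2
    rw [← Finset.prod_mul_distrib]
    exact Finset.prod_congr rfl fun k _ => hGf _ _
  have hms : ∀ s, ∃ p : Fin n → I × I, s = fun k => ngmk g (kap (p k)) := by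
    intro s
    have : ∀ k, ∃ p, s k = ngmk g (kap p) := by
      intro k
      obtain ⟨z, hz⟩ := ngmk_surj g (s k)
      obtain ⟨p, rfl⟩ := kap_surj z
      exact ⟨p, hz.symm⟩
    choose p hp using this
    exact ⟨p, funext hp⟩
  let m' : (Fin n → Ng g) → EE := fun s => ⟨m s, by
    obtain ⟨p, rfl⟩ := hms s
    rw [hmv]
    exact (pp (PW n g p)).2⟩
  have hm' : Continuous m' := hm.subtype_mk _
  have hr : ∀ s t, spRel n (Ng g) s t → m' s = m' t := by
    rintro s t ⟨e, rfl⟩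
    apply Subtype.ext
    ext x
    show ∏ k, G (s k) x = ∏ k, G (s (e k)) x
    exact (Equiv.prod_comp e (fun k => G (s k) x)).symm
  refine ⟨⟨Quot.lift m' hr, continuous_quot_lift hr hm'⟩, fun p => ?_⟩
  exact Subtype.ext (hmv p)

/-- parametrisation of the discs -/
def par (n : ℕ) (y : Co n → I) (k : Fin n) : I × I :=
  (y (Sum.inl k), ∏ i ∈ Finset.Ici k, y (Sum.inr i))

theorem par_cont (n : ℕ) : Continuous (par n) := by
  refine continuous_pi fun k => ?_
  refine (continuous_apply _).prodMk ?_
  exact continuous_finsetProd _ fun i _ => continuous_apply _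

/-- the map to the symmetric product -/
def qq (n g : ℕ) : C(Co n → I, SP n (Ng g)) :=
  ⟨fun y => spmk n (fun k => ngmk g (kap (par n y k))), by
    refine (spmk_quot n).continuous.comp (continuous_pi fun k => ?_)
    exact (ngmk_cont g).comp (kap_cont.comp ((continuous_apply k).comp (par_cont n)))⟩

/-- the lift -/
def Ph (n g : ℕ) : C(Co n → I, WW) := ⟨fun y => PW n g (par n y), (PW_cont n g).comp (par_cont n)⟩

/-- Labels from a categorical cover -/
theorem label_exists {Y Q : Type*} [TopologicalSpace Y] [T2Space Y] [CompactSpace Y]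
    [MetricSpace Q] [CompactSpace Q]
    (c : C(Y, EE)) (q : C(Q, Y)) (Phi : C(Q, WW)) (hc : ∀ y, c (q y) = pp (Phi y))
    (r : ℕ) (hr : catLE Y r) :
    ∃ (l : Q → Lab) (δ : ℝ), 0 < δ ∧ (∀ y, (l y).key < r + 1) ∧
      (∀ y y', q y = q y' → Phi y' = Phi y → l y' = l y) ∧
      (∀ y y', q y = q y' → Phi y' = (-1 : ℤˣ) • Phi y → l y' = (l y).neg) ∧
      (∀ y y', dist y y' < δ → (l y).key = (l y').key → l y = l y') := by
  obtain ⟨U, hUo, hUc, hUn⟩ := hr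
  obtain ⟨K, hKc, hKcl, hKU⟩ := exists_iUnion_eq_closed_subset hUo
    (fun _ => Set.toFinite _) hUc
  choose h hcont hne heq using fun i => sign_fun c q Phi hc (U i) (hUn i)
  have hidx : ∀ ξ : Y, ∃ i, ξ ∈ K i := by
    intro ξ
    have : ξ ∈ ⋃ i, K i := by rw [hKc]; trivial
    exact Set.mem_iUnion.mp this
  choose ix hix using hidx
  have hδ : ∀ i, ∃ δ : ℝ, 0 < δ ∧ ∀ (y y' : Q) (hy : q y ∈ K i) (hy' : q y' ∈ K i),
      dist y y' < δ → (0 < h i ⟨y, hKU i hy⟩ ↔ 0 < h i ⟨y', hKU i hy'⟩) := by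
    intro i
    have hcomp : CompactSpace (q ⁻¹' K i) :=
      isCompact_iff_compactSpace.mp (((hKcl i).preimage q.continuous).isCompact)
    let f : (q ⁻¹' K i) → ℝ := fun y =>
      h i ⟨y.1, hKU i y.2⟩ / |h i ⟨y.1, hKU i y.2⟩|
    have h0 : Continuous fun y : (q ⁻¹' K i) => h i ⟨y.1, hKU i y.2⟩ :=
      (hcont i).comp (continuous_subtype_val.subtype_mk _)
    have hf : Continuous f := h0.div₀ h0.abs (fun y => abs_ne_zero.mpr (hne i _))
    have hu := CompactSpace.uniformContinuous_of_continuous hf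
    rw [Metric.uniformContinuous_iff] at hu
    obtain ⟨δ, hδ, hd⟩ := hu 1 one_pos
    refine ⟨δ, hδ, fun y y' hy hy' hdist => ?_⟩
    have h1 : dist (f ⟨y, hy⟩) (f ⟨y', hy'⟩) < 1 := hd hdist
    rw [Real.dist_eq] at h1
    have e1 : f ⟨y, hy⟩ = h i ⟨y, hKU i hy⟩ / |h i ⟨y, hKU i hy⟩| := rfl
    have e2 : f ⟨y', hy'⟩ = h i ⟨y', hKU i hy'⟩ / |h i ⟨y', hKU i hy'⟩| := rfl
    rw [e1, e2] at h1
    rcases (hne i ⟨y, hKU i hy⟩).lt_or_gt with a | a <;>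
      rcases (hne i ⟨y', hKU i hy'⟩).lt_or_gt with b | b
    · exact iff_of_false a.not_gt b.not_gt
    · rw [abs_of_neg a, abs_of_pos b, div_neg, div_self a.ne, div_self b.ne'] at h1
      norm_num at h1
    · rw [abs_of_pos a, abs_of_neg b, div_neg, div_self a.ne', div_self b.ne] at h1
      norm_num at h1
    · exact iff_of_true a b
  choose δ hδ0 hδ1 using hδ
  have hall : ∃ d : ℝ, 0 < d ∧ ∀ i, d ≤ δ i := by
    refine ⟨Finset.univ.inf' Finset.univ_nonempty δ, ?_, fun i => Finset.inf'_le _ (Finset.mem_univ i)⟩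
    rw [Finset.lt_inf'_iff]
    exact fun i _ => hδ0 i
  obtain ⟨d, hd0, hd⟩ := hall
  let l : Q → Lab := fun y =>
    toLex ((ix (q y)).1, decide (0 < h (ix (q y)) ⟨y, hKU _ (hix (q y))⟩))
  have hgen : ∀ (s : ℤˣ) y y', q y = q y' → Phi y' = s • Phi y → (ix (q y')) = ix (q y) ∧
      h (ix (q y')) ⟨y', hKU _ (hix (q y'))⟩ =
        ((s : ℤ) : ℝ) * h (ix (q y)) ⟨y, hKU _ (hix (q y))⟩ := by
    intro s y y' e1 e2
    have e3 : ix (q y') = ix (q y) := by rw [e1]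
    refine ⟨e3, ?_⟩
    have : ∀ (i i' : Fin (r + 1)) (m : q y ∈ U i) (m' : q y' ∈ U i'), i' = i →
        h i' ⟨y', m'⟩ = ((s : ℤ) : ℝ) * h i ⟨y, m⟩ := by
      rintro i i' m m' rfl
      exact heq i' s ⟨y, m⟩ ⟨y', m'⟩ e1 e2
    exact this _ _ _ _ e3
  refine ⟨l, d, hd0, fun y => (ix (q y)).2, ?_, ?_, ?_⟩
  · intro y y' e1 e2
    obtain ⟨e3, e4⟩ := hgen 1 y y' e1 (by rw [one_smul]; exact e2)
    simp only [l]
    rw [e4, e3]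
    simp
  · intro y y' e1 e2
    obtain ⟨e3, e4⟩ := hgen (-1) y y' e1 e2
    simp only [l]
    rw [e4, e3]
    simp only [Lab.neg]
    have hn := hne (ix (q y)) ⟨y, hKU _ (hix (q y))⟩
    have : decide (0 < ((((-1 : ℤˣ) : ℤ) : ℝ)) * h (ix (q y)) ⟨y, hKU _ (hix (q y))⟩) =
        !decide (0 < h (ix (q y)) ⟨y, hKU _ (hix (q y))⟩) := by
      rcases hn.lt_or_gt with a | a
      · simp [a, a.le]
      · simp [a, a.le]
    rw [this]
    rfl
  · intro y y' hdist hk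
    have e3 : ix (q y) = ix (q y') := Fin.ext hk
    have : ∀ (i i' : Fin (r + 1)) (m : q y ∈ K i) (m' : q y' ∈ K i'), i = i' →
        (0 < h i ⟨y, hKU i m⟩ ↔ 0 < h i' ⟨y', hKU i' m'⟩) := by
      rintro i i' m m' rfl
      exact hδ1 i y y' m m' (hdist.trans_le (hd i))
    have h5 := this _ _ (hix (q y)) (hix (q y')) e3
    exact congrArg toLex (Prod.ext hk (decide_eq_decide.mpr h5))

end LSNg

/-! ### The lower bound -/
namespace LSNg

/-- grid points -/
def gp (L : ℕ) (x : ℕ) : I := ⟨min ((x : ℝ) / L) 1, by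
  constructor
  · positivity
  · exact min_le_right _ _⟩

theorem gp_val (L x : ℕ) : (gp L x : ℝ) = min ((x : ℝ) / L) 1 := rfl

theorem gp_zero (L : ℕ) : gp L 0 = 0 := by
  apply Subtype.ext; rw [gp_val]; simp

theorem gp_top (L : ℕ) (hL : 0 < L) : gp L L = 1 := by
  apply Subtype.ext; rw [gp_val, div_self (by positivity)]; simp

theorem gp_le (L x : ℕ) (hL : 0 < L) (h : x ≤ L) : (gp L x : ℝ) = x / L := by
  rw [gp_val, min_eq_left]
  rw [div_le_one (by positivity)]
  exact_mod_cast h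

theorem gp_near (L x x' : ℕ) (hL : 0 < L) (h : x ≤ x' + 1) (h' : x' ≤ x + 1) :
    dist (gp L x) (gp L x') ≤ 1 / L := by
  rw [Subtype.dist_eq, Real.dist_eq, gp_val, gp_val]
  refine (abs_min_sub_min_le_max _ _ _ _).trans ?_
  rw [sub_self, abs_zero]
  refine max_le ?_ (by positivity)
  rw [← sub_div, abs_div, abs_of_pos (show (0 : ℝ) < L by positivity)]
  gcongr
  rw [abs_le]
  have h1 : (x : ℝ) ≤ x' + 1 := by exact_mod_cast h
  have h2 : (x' : ℝ) ≤ x + 1 := by exact_mod_cast h'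
  constructor <;> linarith

/-- the grid point of an integer vector -/
def gv (n L : ℕ) (w : Co n → ℕ) : Co n → I := fun c => gp L (w c)

theorem qq_congr (n g : ℕ) (y y' : Co n → I)
    (h : ∀ k, ngmk g (kap (par n y k)) = ngmk g (kap (par n y' k))) : qq n g y = qq n g y' := by
  show spmk n _ = spmk n _
  congr 1
  funext k
  exact h k

theorem Ph_val (n g : ℕ) (y : Co n → I) (T : ℝ) :
    (Ph n g y).1 T = ∏ k : Fin n, PP g (par n y k) T := rfl

theorem Ph_congr (n g : ℕ) (y y' : Co n → I)
    (h : ∀ k T, PP g (par n y k) T = PP g (par n y' k) T) : Ph n g y = Ph n g y' := by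
  apply WW.ext'
  intro T
  rw [Ph_val, Ph_val]
  exact Finset.prod_congr rfl fun k _ => h k T

theorem par_upd_ne (n : ℕ) (y : Co n → I) (j k : Fin n) (x : I) (h : k ≠ j) :
    par n (Function.update y (Sum.inl j) x) k = par n y k := by
  simp [par, Function.update, h]

theorem par_upd (n : ℕ) (y : Co n → I) (j : Fin n) (x : I) :
    par n (Function.update y (Sum.inl j) x) j = (x, (par n y j).2) := by
  simp [par, Function.update]

theorem gv_upd (n L : ℕ) (w : Co n → ℕ) (c : Co n) (x : ℕ) :
    gv n L (Function.update w c x) = Function.update (gv n L w) c (gp L x) := by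
  funext d
  by_cases h : d = c
  · subst h; simp [gv]
  · simp [gv, h]

theorem par_snd_zero (n : ℕ) (y : Co n → I) (j : Fin n) (h : y (Sum.inr j) = 0) :
    (par n y j).2 = 0 :=
  Finset.prod_eq_zero (Finset.mem_Ici.mpr le_rfl) h

theorem par_snd_one (n : ℕ) (y : Co n → I) (j : Fin n) (h : ∀ i, j ≤ i → y (Sum.inr i) = 1) :
    (par n y j).2 = 1 :=
  Finset.prod_eq_one fun i hi => h i (Finset.mem_Ici.mp hi)

theorem lower (n g r : ℕ) (hg : 1 ≤ g) (hr : catLE (SP n (Ng g)) r) : 2 * n ≤ r := by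
  have := ng_t2 g hg
  have : T2Space (SP n (Ng g)) := sp_t2 n
  have : CompactSpace (SP n (Ng g)) := sp_compact n
  obtain ⟨c, hc⟩ := exists_c n g hg
  obtain ⟨l, δ, hδ, hkey, hpos, hneg, hnear⟩ :=
    label_exists c (qq n g) (Ph n g) (fun y => hc _) r hr
  obtain ⟨M, hM⟩ := exists_nat_gt (1 / δ)
  have hM0 : 0 < M := by
    have : (0 : ℝ) < M := lt_trans (by positivity) hM
    exact_mod_cast this
  set L := 2 * g * M with hL
  have hL0 : 0 < L := by positivity
  have hML : M ≤ L := by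
    rw [hL]; nlinarith
  have hLδ : 1 / (L : ℝ) < δ := by
    rw [div_lt_comm₀ (by positivity) hδ]
    refine hM.trans_le ?_
    exact_mod_cast hML
  have hLr : (L : ℝ) = 2 * g * M := by rw [hL]; push_cast; ring
  have hgM : (2 * g : ℝ) ≠ 0 := by positivity
  have hMr : (M : ℝ) ≠ 0 := by positivity
  have hsh : ∀ x : ℕ, x + M ≤ L →
      2 * g * (gp L (x + M) : ℝ) = 2 * g * (gp L x : ℝ) + 1 := by
    intro x hx
    rw [gp_le L _ hL0 hx, gp_le L _ hL0 (by omega), hLr]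
    push_cast
    field_simp
  have hval : ∀ x : ℕ, x ≤ L → 2 * g * (gp L x : ℝ) = x / M := by
    intro x hx
    rw [gp_le L _ hL0 hx, hLr]
    field_simp
  have hgood : Good n g M (fun w => l (gv n L w)) := by
    constructor
    · -- hLR
      intro w j hw
      rw [← hL, gv_upd, gp_top L hL0]
      have h0 : par n (gv n L w) j = (0, (par n (gv n L w) j).2) := by
        refine Prod.ext ?_ rfl
        show gp L (w (Sum.inl j)) = 0
        rw [hw, gp_zero]
      apply hpos
      · apply qq_congr
        intro k
        by_cases hk : k = j
        · subst hk
          rw [par_upd]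
          congr 1
          rw [h0]
          apply Subtype.ext
          rw [kap_val, kap_val]
          have h2 := ee_nat 1
          have h3 := ee_nat 0
          push_cast at h2 h3
          simp [h2, h3]
        · rw [par_upd_ne _ _ _ _ _ hk]
      · apply Ph_congr
        intro k T
        by_cases hk : k = j
        · subst hk
          rw [par_upd, h0]
          exact (PP_lr g hg _ T).symm
        · rw [par_upd_ne _ _ _ _ _ hk]
    · -- hB
      intro w j x hw
      rw [gv_upd]
      have h0 : par n (gv n L w) j = ((par n (gv n L w) j).1, 0) := by
        refine Prod.ext rfl ?_
        apply par_snd_zero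
        show gp L (w (Sum.inr j)) = 0
        rw [hw, gp_zero]
      apply hpos
      · apply qq_congr
        intro k
        by_cases hk : k = j
        · subst hk
          rw [par_upd]
          congr 1
          rw [h0]
          apply Subtype.ext
          rw [kap_val, kap_val]
          simp
        · rw [par_upd_ne _ _ _ _ _ hk]
      · apply Ph_congr
        intro k T
        by_cases hk : k = j
        · subst hk
          rw [par_upd, h0]
          exact PP_zero g _ _ T
        · rw [par_upd_ne _ _ _ _ _ hk]
    · -- hSw
      intro w j j' hj hw
      have hjj : j < j' := by rw [Fin.lt_def]; omega
      have hb : (par n (gv n L w) j).2 = (par n (gv n L w) j').2 := by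
        show (∏ i ∈ Finset.Ici j, _) = ∏ i ∈ Finset.Ici j', _
        have : Finset.Ici j = insert j (Finset.Ici j') := by
          ext i
          simp only [Finset.mem_Ici, Finset.mem_insert, Fin.le_def, Fin.ext_iff]
          omega
        rw [this, Finset.prod_insert (by simp [hjj])]
        have : gv n L w (Sum.inr j) = 1 := by
          show gp L (w (Sum.inr j)) = 1
          rw [hw, gp_top L hL0]
        rw [this, one_mul]
      have hsw : ∀ k, par n (gv n L (swp (Sum.inl j) (Sum.inl j') w)) k =
          par n (gv n L w) (Equiv.swap j j' k) := by
        intro k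
        have h2 : ∀ k, (par n (gv n L (swp (Sum.inl j) (Sum.inl j') w)) k).2 =
            (par n (gv n L w) k).2 := by
          intro k
          refine Finset.prod_congr rfl fun i _ => ?_
          show gp L (w (Equiv.swap _ _ (Sum.inr i))) = gp L (w (Sum.inr i))
          rw [Equiv.swap_apply_of_ne_of_ne (by simp) (by simp)]
        refine Prod.ext ?_ ?_
        · show gp L (w (Equiv.swap _ _ (Sum.inl k))) = gp L (w (Sum.inl (Equiv.swap j j' k)))
          congr 2
          rcases eq_or_ne k j with rfl | h3
          · simp
          · rcases eq_or_ne k j' with rfl | h4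
            · simp
            · rw [Equiv.swap_apply_of_ne_of_ne (by simpa using h3) (by simpa using h4),
                Equiv.swap_apply_of_ne_of_ne h3 h4]
        · rw [h2]
          rcases eq_or_ne k j with rfl | h3
          · rw [Equiv.swap_apply_left, hb]
          · rcases eq_or_ne k j' with rfl | h4
            · rw [Equiv.swap_apply_right, hb]
            · rw [Equiv.swap_apply_of_ne_of_ne h3 h4]
      apply hpos
      · show spmk n _ = spmk n _
        rw [spmk_eq_iff]
        refine ⟨Equiv.swap j j', ?_⟩
        funext k
        simp only [Function.comp]
        rw [hsw]
      · apply WW.ext'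
        intro T
        rw [Ph_val, Ph_val]
        simp only [hsw]
        exact Equiv.prod_comp (Equiv.swap j j') (fun k => PP g (par n (gv n L w) k) T)
    · -- hT0
      intro w j hw hj
      have hjL : w (Sum.inl j) + M ≤ L := by rw [hL]; nlinarith
      have h3 := hsh _ hjL
      have h2 := hval (w (Sum.inl j)) (by omega)
      have h1 : (w (Sum.inl j) : ℝ) / M ≤ 1 := by
        rw [div_le_one (by positivity)]; exact_mod_cast hj
      have hp : par n (gv n L w) j = (gp L (w (Sum.inl j)), 1) := by
        refine Prod.ext rfl ?_
        refine par_snd_one _ _ _ fun i hi => ?_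
        show gp L (w (Sum.inr i)) = 1
        rw [hw i hi, gp_top L hL0]
      unfold shf
      rw [gv_upd]
      apply hneg
      · apply qq_congr
        intro k
        by_cases hk : k = j
        · subst hk
          rw [par_upd, hp]
          refine kap_rel g hg 0 _ _ (by omega) ?_ ?_ h3
          · rw [h2, Nat.cast_zero, mul_zero]; positivity
          · rw [h2]; push_cast; linarith
        · rw [par_upd_ne _ _ _ _ _ hk]
      · apply WW.ext'
        intro T
        rw [smul_val]
        rw [Ph_val, Ph_val]
        rw [← Finset.mul_prod_erase _ _ (Finset.mem_univ j),
          ← Finset.mul_prod_erase _ (fun k => PP g (par n (gv n L w) k) T) (Finset.mem_univ j),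
          par_upd, hp, PP_T0 g hg _ _ (by rw [h2]; exact h1) h3]
        have : ∀ k ∈ Finset.univ.erase j,
            PP g (par n (Function.update (gv n L w) (Sum.inl j) (gp L (w (Sum.inl j) + M))) k) T =
            PP g (par n (gv n L w) k) T := by
          intro k hk
          rw [par_upd_ne _ _ _ _ _ (Finset.ne_of_mem_erase hk)]
        rw [Finset.prod_congr rfl this]
        push_cast
        ring
    · -- hT1
      intro w j i hw hi1 hig hlo hhi
      have hjL : w (Sum.inl j) + M ≤ L := by
        rw [hL]
        have : (2 * i + 2) * M ≤ 2 * g * M := Nat.mul_le_mul_right _ (by omega)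
        nlinarith
      have h3 := hsh _ hjL
      have h2 := hval (w (Sum.inl j)) (by omega)
      have h1 : (w (Sum.inl j) : ℝ) / M ≤ 2 * i + 1 := by
        rw [div_le_iff₀ (by positivity)]; exact_mod_cast hhi
      have h0 : 2 * (i : ℝ) ≤ (w (Sum.inl j) : ℝ) / M := by
        rw [le_div_iff₀ (by positivity)]; exact_mod_cast hlo
      have hp : par n (gv n L w) j = (gp L (w (Sum.inl j)), 1) := by
        refine Prod.ext rfl ?_
        refine par_snd_one _ _ _ fun i hi => ?_
        show gp L (w (Sum.inr i)) = 1
        rw [hw i hi, gp_top L hL0]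
      unfold shf
      rw [gv_upd]
      apply hpos
      · apply qq_congr
        intro k
        by_cases hk : k = j
        · subst hk
          rw [par_upd, hp]
          refine kap_rel g hg i _ _ hig ?_ ?_ h3
          · rw [h2]; exact h0
          · rw [h2]; exact h1
        · rw [par_upd_ne _ _ _ _ _ hk]
      · apply Ph_congr
        intro k T
        by_cases hk : k = j
        · subst hk
          rw [par_upd, hp]
          exact PP_T1 g hg i hi1 _ _ (by rw [h2]; exact h0) h3 T
        · rw [par_upd_ne _ _ _ _ _ hk]
    · -- hN
      intro u w h1 h2 hk
      refine hnear _ _ (lt_of_le_of_lt ?_ hLδ) hk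
      rw [dist_pi_le_iff (by positivity)]
      intro c
      exact gp_near L _ _ hL0 (h1 c) (h2 c)
  obtain ⟨w, hw⟩ := comb_main hgood hg
  have := hkey (gv n L w)
  exact Nat.le_of_lt_succ (lt_of_le_of_lt hw this)

end LSNg

/-! ### The upper bound: general part -/
namespace LSNg

/-- `K` is a contraction to `v` near `x`. -/
def NH {X : Type*} [TopologicalSpace X] (v : X) (K : I × X → X) (x : X) : Prop :=
  (∀ s, ContinuousAt K (s, x)) ∧ K (0, x) = x ∧ K (1, x) = v

section
variable {X : Type*} [TopologicalSpace X] (n : ℕ) (m1 m2 : C(X, ℝ))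

open Classical in
/-- good level -/
def Gd (t : ℝ) (d : ℕ) (y : Fin n → X) : Prop :=
  0 < t ∧ t < 1 ∧ (∀ i, m1 (y i) ≠ t ∧ m2 (y i) ≠ t) ∧
    (Finset.univ.filter fun i => t < m1 (y i)).card +
      (Finset.univ.filter fun i => t < m2 (y i)).card = d

theorem Gd.perm {t : ℝ} {d : ℕ} {y : Fin n → X} (h : Gd n m1 m2 t d y) (e : Equiv.Perm (Fin n)) :
    Gd n m1 m2 t d (y ∘ e) := by
  classical
  obtain ⟨h1, h2, h3, h4⟩ := h
  refine ⟨h1, h2, fun i => h3 (e i), ?_⟩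
  rw [← h4]
  have key : ∀ P : Fin n → Prop, (Finset.univ.filter fun i => P (e i)).card =
      (Finset.univ.filter P).card := by
    intro P
    refine Finset.card_equiv e ?_
    intro i
    simp
  congr 1
  · convert key (fun i => t < m1 (y i)) using 2
    rfl
  · convert key (fun i => t < m2 (y i)) using 2
    rfl

theorem Gd.indep_aux {t t' : ℝ} {d : ℕ} {y : Fin n → X} (h : Gd n m1 m2 t d y)
    (h' : Gd n m1 m2 t' d y) (hle : t ≤ t') (i : Fin n) :
    (t < m1 (y i) ↔ t' < m1 (y i)) ∧ (t < m2 (y i) ↔ t' < m2 (y i)) := by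
  classical
  obtain ⟨_, _, _, h4⟩ := h
  obtain ⟨_, _, _, h4'⟩ := h'
  have s1 : (Finset.univ.filter fun i => t' < m1 (y i)) ⊆
      (Finset.univ.filter fun i => t < m1 (y i)) := by
    intro i; simp only [Finset.mem_filter, Finset.mem_univ, true_and]
    exact fun h => hle.trans_lt h
  have s2 : (Finset.univ.filter fun i => t' < m2 (y i)) ⊆
      (Finset.univ.filter fun i => t < m2 (y i)) := by
    intro i; simp only [Finset.mem_filter, Finset.mem_univ, true_and]
    exact fun h => hle.trans_lt h
  have c1 := Finset.card_le_card s1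
  have c2 := Finset.card_le_card s2
  have h5 : (Finset.univ.filter fun i => t < m1 (y i)).card +
      (Finset.univ.filter fun i => t < m2 (y i)).card = d := by convert h4
  have h5' : (Finset.univ.filter fun i => t' < m1 (y i)).card +
      (Finset.univ.filter fun i => t' < m2 (y i)).card = d := by convert h4'
  have e1 := Finset.eq_of_subset_of_card_le s1 (by omega)
  have e2 := Finset.eq_of_subset_of_card_le s2 (by omega)
  rw [Finset.ext_iff] at e1 e2
  have e1 := e1 i
  have e2 := e2 i
  simp only [Finset.mem_filter, Finset.mem_univ, true_and] at e1 e2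
  exact ⟨e1.symm, e2.symm⟩

theorem Gd.indep {t t' : ℝ} {d : ℕ} {y : Fin n → X} (h : Gd n m1 m2 t d y)
    (h' : Gd n m1 m2 t' d y) (i : Fin n) :
    (t < m1 (y i) ↔ t' < m1 (y i)) ∧ (t < m2 (y i) ↔ t' < m2 (y i)) := by
  rcases le_total t t' with hle | hle
  · exact Gd.indep_aux n m1 m2 h h' hle i
  · have := Gd.indep_aux n m1 m2 h' h hle i
    exact ⟨this.1.symm, this.2.symm⟩

theorem side_eventually {Y : Type*} [TopologicalSpace Y] (f : Y → ℝ) (hf : Continuous f) (y0 : Y)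
    (t : ℝ) (h : f y0 ≠ t) : ∀ᶠ y in 𝓝 y0, f y ≠ t ∧ (t < f y ↔ t < f y0) := by
  rcases h.lt_or_gt with h | h
  · filter_upwards [hf.continuousAt.eventually_lt_const h] with y hy
    exact ⟨hy.ne, iff_of_false hy.not_gt h.not_gt⟩
  · filter_upwards [hf.continuousAt.eventually_const_lt h] with y hy
    exact ⟨hy.ne', iff_of_true hy h⟩

theorem Gd.eventually {t : ℝ} {d : ℕ} {y0 : Fin n → X} (h : Gd n m1 m2 t d y0) :
    ∀ᶠ y in 𝓝 y0, Gd n m1 m2 t d y ∧ ∀ i, (t < m1 (y i) ↔ t < m1 (y0 i)) ∧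
      (t < m2 (y i) ↔ t < m2 (y0 i)) := by
  obtain ⟨h1, h2, h3, h4⟩ := h
  have e1 : ∀ i, ∀ᶠ y : Fin n → X in 𝓝 y0, m1 (y i) ≠ t ∧ (t < m1 (y i) ↔ t < m1 (y0 i)) :=
    fun i => side_eventually (fun y : Fin n → X => m1 (y i)) (by fun_prop) y0 t (h3 i).1
  have e2 : ∀ i, ∀ᶠ y : Fin n → X in 𝓝 y0, m2 (y i) ≠ t ∧ (t < m2 (y i) ↔ t < m2 (y0 i)) :=
    fun i => side_eventually (fun y : Fin n → X => m2 (y i)) (by fun_prop) y0 t (h3 i).2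
  filter_upwards [Filter.eventually_all.mpr e1, Filter.eventually_all.mpr e2] with y a b
  refine ⟨⟨h1, h2, fun i => ⟨(a i).1, (b i).1⟩, ?_⟩, fun i => ⟨(a i).2, (b i).2⟩⟩
  rw [← h4]
  simp only [fun i => (a i).2, fun i => (b i).2]

theorem Gd.exists (y : Fin n → X) : ∃ d, d < 2 * n + 1 ∧ ∃ t, Gd n m1 m2 t d y := by
  classical
  have hfin : (Set.range (fun i => m1 (y i)) ∪ Set.range (fun i => m2 (y i))).Finite :=
    (Set.finite_range _).union (Set.finite_range _)
  have hinf : (Set.Ioo (0 : ℝ) 1).Infinite := Set.Ioo_infinite one_pos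
  obtain ⟨t, ht, hn⟩ := hinf.exists_notMem_finite hfin
  refine ⟨_, ?_, t, ht.1, ht.2, ?_, rfl⟩
  · have a := Finset.card_filter_le (Finset.univ : Finset (Fin n)) (fun i => t < m1 (y i))
    have b := Finset.card_filter_le (Finset.univ : Finset (Fin n)) (fun i => t < m2 (y i))
    simp only [Finset.card_univ, Fintype.card_fin] at a b
    have : ∀ x z : ℕ, x ≤ n → z ≤ n → x + z < 2 * n + 1 := by intros; omega
    apply this
    · convert a
    · convert b
  · intro i
    constructor
    · intro e; exact hn (Or.inl ⟨i, e⟩)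
    · intro e; exact hn (Or.inr ⟨i, e⟩)

end

/-- choice of contraction -/
def cK {X : Type*} (K0 K1 K2 : I × X → X) (a b : Prop) [Decidable a] [Decidable b] : I × X → X :=
  if b then K2 else if a then K1 else K0

theorem upper_gen {X : Type*} [TopologicalSpace X] (n : ℕ) (m1 m2 : C(X, ℝ)) (v : X)
    (K0 K1 K2 : I × X → X)
    (h0 : ∀ x, m1 x < 1 → m2 x < 1 → NH v K0 x)
    (h1 : ∀ x, 0 < m1 x → m2 x < 1 → NH v K1 x)
    (h2 : ∀ x, 0 < m2 x → NH v K2 x) : catLE (SP n X) (2 * n) := by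
  classical
  have hsel : ∀ t d (y : Fin n → X), Gd n m1 m2 t d y → ∀ i,
      NH v (cK K0 K1 K2 (t < m1 (y i)) (t < m2 (y i))) (y i) := by
    rintro t d y ⟨a, b, c, _⟩ i
    unfold cK
    have c1 := (c i).1
    have c2 := (c i).2
    split_ifs with e1 e2
    · exact h2 _ (a.trans e1)
    · exact h1 _ (a.trans e2) (lt_of_le_of_lt (not_lt.mp e1) b)
    · exact h0 _ (lt_of_le_of_lt (not_lt.mp e2) b) (lt_of_le_of_lt (not_lt.mp e1) b)
  let tt : ℕ → (Fin n → X) → ℝ := fun d y => if h : ∃ t, Gd n m1 m2 t d y then h.choose else 0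
  have htt : ∀ t d y, Gd n m1 m2 t d y → Gd n m1 m2 (tt d y) d y := by
    intro t d y h
    have h' : ∃ t, Gd n m1 m2 t d y := ⟨t, h⟩
    simp only [tt, dif_pos h']
    exact h'.choose_spec
  let F : ℕ → I × (Fin n → X) → (Fin n → X) := fun d p i =>
    cK K0 K1 K2 (tt d p.2 < m1 (p.2 i)) (tt d p.2 < m2 (p.2 i)) (p.1, p.2 i)
  have hF : ∀ t d y, Gd n m1 m2 t d y → ∀ s i, F d (s, y) i =
      cK K0 K1 K2 (t < m1 (y i)) (t < m2 (y i)) (s, y i) := by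
    intro t d y h s i
    have := Gd.indep n m1 m2 (htt t d y h) h i
    simp only [F, this.1, this.2]
  have hFe : ∀ t d y, Gd n m1 m2 t d y → ∀ s (e : Equiv.Perm (Fin n)),
      F d (s, y ∘ e) = F d (s, y) ∘ e := by
    intro t d y h s e
    funext i
    rw [hF t d _ (h.perm n m1 m2 e)]
    exact (hF t d _ h s (e i)).symm
  have hFc : ∀ t d y, Gd n m1 m2 t d y → ∀ s, ContinuousAt (F d) (s, y) := by
    intro t d y h s
    rw [continuousAt_pi]
    intro i
    have hN := (hsel t d y h i).1 s
    have hc : ContinuousAt (fun p : I × (Fin n → X) =>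
        cK K0 K1 K2 (t < m1 (y i)) (t < m2 (y i)) (p.1, p.2 i)) (s, y) := by
      refine ContinuousAt.comp (f := fun p : I × (Fin n → X) => (p.1, p.2 i)) (x := (s, y)) ?_ ?_
      · exact hN
      · exact (by fun_prop : Continuous fun p : I × (Fin n → X) => (p.1, p.2 i)).continuousAt
    refine hc.congr ?_
    have hev := (continuous_snd.tendsto (s, y)).eventually (h.eventually n m1 m2)
    filter_upwards [hev] with p hp
    rw [show p = (p.1, p.2) from rfl, hF t d p.2 hp.1]
    simp only [(hp.2 i).1, (hp.2 i).2]
  let W : ℕ → Set (Fin n → X) := fun d => {y | ∃ t, Gd n m1 m2 t d y}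
  have hWo : ∀ d, IsOpen (W d) := by
    intro d
    rw [isOpen_iff_mem_nhds]
    rintro y ⟨t, ht⟩
    filter_upwards [ht.eventually n m1 m2] with y hy
    exact ⟨t, hy.1⟩
  have hWe : ∀ d y y', spmk n y = spmk n y' → y ∈ W d → y' ∈ W d := by
    rintro d y y' h ⟨t, ht⟩
    rw [spmk_eq_iff] at h
    obtain ⟨e, rfl⟩ := h
    exact ⟨t, ht.perm n m1 m2 e⟩
  have hop : IsOpenQuotientMap (spmk n : (Fin n → X) → SP n X) := spmk_open n
  refine ⟨fun d => spmk n '' W d, fun d => hop.isOpenMap _ (hWo d), ?_, ?_⟩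
  · rw [Set.eq_univ_iff_forall]
    intro u
    obtain ⟨y, rfl⟩ := hop.surjective u
    obtain ⟨d, hd, ht⟩ := Gd.exists n m1 m2 y
    exact Set.mem_iUnion.mpr ⟨⟨d, hd⟩, y, ht, rfl⟩
  · intro d
    let rep : SP n X → (Fin n → X) := Function.surjInv hop.surjective
    have hrep : ∀ u, spmk n (rep u) = u := Function.surjInv_eq hop.surjective
    let Fb : I × SP n X → SP n X := fun p => spmk n (F d (p.1, rep p.2))
    have hFb : ∀ s y, y ∈ W d → Fb (s, spmk n y) = spmk n (F d (s, y)) := by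
      rintro s y ⟨t, ht⟩
      have h5 := hrep (spmk n y)
      have h6 := (spmk_eq_iff n _ _).mp h5.symm
      obtain ⟨e, he⟩ := h6
      show spmk n (F d (s, rep (spmk n y))) = _
      rw [← he, hFe t d y ht, spmk_eq_iff]
      refine (spRel_equiv n).symm ⟨e, rfl⟩
    have hFbc : ∀ s u, u ∈ spmk n '' W d → ContinuousAt Fb (s, u) := by
      rintro s _ ⟨y, hy, rfl⟩
      have hq : IsOpenQuotientMap (Prod.map (id : I → I) (spmk n : (Fin n → X) → SP n X)) :=
        IsOpenQuotientMap.id.prodMap hop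
      have : ContinuousAt (Fb ∘ Prod.map (id : I → I) (spmk n : (Fin n → X) → SP n X)) (s, y) := by
        obtain ⟨t, ht⟩ := hy
        have h7 : ContinuousAt (fun p => spmk n (F d p)) (s, y) :=
          hop.continuous.continuousAt.comp (hFc t d y ht s)
        refine h7.congr ?_
        have hev := (continuous_snd.tendsto (s, y)).eventually ((hWo d).mem_nhds ⟨t, ht⟩)
        filter_upwards [hev] with p hp
        exact (hFb p.1 p.2 hp).symm
      exact hq.continuousAt_comp_iff.mp this
    refine ⟨spmk n (fun _ => v), ⟨⟨⟨fun p => Fb (p.1, p.2.1), ?_⟩, ?_, ?_⟩⟩⟩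
    · rw [continuous_iff_continuousAt]
      rintro ⟨s, u⟩
      refine ContinuousAt.comp (f := fun p : I × (spmk n '' W d) => (p.1, p.2.1)) (x := (s, u))
        (hFbc s u.1 u.2) ?_
      exact (by fun_prop : Continuous fun p : I × (spmk n '' W d) => (p.1, p.2.1)).continuousAt
    · rintro ⟨_, y, hy, rfl⟩
      show Fb (0, spmk n y) = spmk n y
      rw [hFb _ _ hy]
      obtain ⟨t, ht⟩ := hy
      congr 1
      funext i
      rw [hF t d y ht]
      exact (hsel t d y ht i).2.1
    · rintro ⟨_, y, hy, rfl⟩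
      show Fb (1, spmk n y) = spmk n (fun _ => v)
      rw [hFb _ _ hy]
      obtain ⟨t, ht⟩ := hy
      congr 1
      funext i
      rw [hF t d y ht]
      exact (hsel t d y ht i).2.2

end LSNg

/-! ### The upper bound: contractions in the surface -/
namespace LSNg

theorem ng_nh (g : ℕ) (hg : 1 ≤ g) (Φ : I × Disc → Ng g) (v : Ng g)
    (hrel : ∀ s z w, nonorientRel g z w → Φ (s, z) = Φ (s, w)) (V : Set (Ng g)) (hV : IsOpen V)
    (hcont : ∀ s z, ngmk g z ∈ V → ContinuousAt Φ (s, z))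
    (h0 : ∀ z, ngmk g z ∈ V → Φ (0, z) = ngmk g z)
    (h1 : ∀ z, ngmk g z ∈ V → Φ (1, z) = v) : ∃ K : I × Ng g → Ng g, ∀ x ∈ V, NH v K x := by
  let K : I × Ng g → Ng g := fun p => Quot.lift (fun z => Φ (p.1, z)) (hrel p.1) p.2
  have hK : ∀ s z, K (s, ngmk g z) = Φ (s, z) := fun s z => rfl
  have := ng_t2 g hg
  have hq : Topology.IsQuotientMap (Prod.map (id : I → I) (ngmk g)) :=
    Topology.IsQuotientMap.of_surjective_continuous
      (Function.surjective_id.prodMap (ngmk_surj g)) (continuous_id.prodMap (ngmk_cont g))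
  have hO : IsOpen ((Set.univ : Set I) ×ˢ V) := isOpen_univ.prod hV
  have hc : ContinuousOn K (Set.univ ×ˢ V) := by
    rw [hq.continuousOn_isOpen_iff hO]
    rintro ⟨s, z⟩ hz
    have hz' : ngmk g z ∈ V := hz.2
    exact (hcont s z hz').continuousWithinAt
  refine ⟨K, fun x hx => ⟨fun s => hc.continuousAt (hO.mem_nhds ⟨trivial, hx⟩), ?_, ?_⟩⟩
  · obtain ⟨z, rfl⟩ := ngmk_surj g x
    rw [hK, h0 z hx]
  · obtain ⟨z, rfl⟩ := ngmk_surj g x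
    rw [hK, h1 z hx]

/-- the vertex -/
def vtx (g : ℕ) : Ng g := ngmk g (kap (0, 1))

theorem ee_pow (x : ℝ) (N : ℕ) : ee x ^ N = ee (N * x) := by
  unfold ee
  rw [← Complex.exp_nat_mul]
  congr 1
  push_cast
  ring

theorem ee_mul (x y : ℝ) : ee x * ee y = ee (x + y) := by
  unfold ee
  rw [← Complex.exp_add]
  congr 1
  push_cast
  ring

theorem rel_pow (g : ℕ) (hg : 1 ≤ g) (z w : Disc) (h : nonorientRel g z w) :
    (z : ℂ) ^ (2 * g) = (w : ℂ) ^ (2 * g) ∧ ‖(z : ℂ)‖ = 1 ∧ ‖(w : ℂ)‖ = 1 := by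
  obtain ⟨j, t, _, _, hz, hw⟩ := h
  rw [hz, hw, polyBP_eq, polyBP_eq, ee_pow, ee_pow]
  refine ⟨?_, ee_norm _, ee_norm _⟩
  have hg' : ((2 * g : ℕ) : ℝ) ≠ 0 := by positivity
  rw [mul_div_cancel₀ _ hg', mul_div_cancel₀ _ hg', ee_eq_iff]
  refine ⟨-1, ?_⟩
  push_cast
  ring

theorem root_vtx (g : ℕ) (hg : 1 ≤ g) (z : Disc) (h : (z : ℂ) ^ (2 * g) = 1) :
    ngmk g z = vtx g := by
  obtain ⟨⟨a, b⟩, rfl⟩ := kap_surj z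
  have hb : (b : ℝ) = 1 := by
    have h1 := congrArg norm h
    rw [norm_pow, kap_norm, norm_one] at h1
    exact (pow_eq_one_iff_of_nonneg b.2.1 (by omega)).mp h1
  have hb' : b = 1 := Subtype.ext hb
  subst hb'
  rw [kap_val] at h
  simp only [Set.Icc.coe_one, Complex.ofReal_one, one_mul] at h
  rw [ee_pow, ← ee_nat 0, ee_eq_iff] at h
  obtain ⟨m, hm⟩ := h
  have hm0 : (0 : ℝ) ≤ m := by
    have : (0 : ℝ) ≤ ((2 * g : ℕ) : ℝ) * (a : ℝ) := mul_nonneg (by positivity) a.2.1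
    rw [hm] at this
    simpa using this
  have hm0' : 0 ≤ m := by exact_mod_cast hm0
  obtain ⟨k, rfl⟩ := Int.eq_ofNat_of_zero_le hm0'
  refine vertex_eq g hg k a ?_
  push_cast at hm
  linarith

/-- rotating homotopy -/
def psi (N : ℕ) (τ : ℂ → ℝ) (p : I × Disc) : Disc :=
  ⟨(p.2 : ℂ) * (((1 - (p.1 : ℝ)) + p.1 / ‖(p.2 : ℂ)‖ : ℝ) : ℂ) *
    ee (-(p.1 * τ ((p.2 : ℂ) ^ N)) / N), by
    rw [norm_mul, ee_norm, mul_one, norm_mul, Complex.norm_real, Real.norm_eq_abs]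
    have h1 := p.2.2
    have h2 := p.1.2.1
    have h3 := p.1.2.2
    have h4 : 0 ≤ ‖(p.2 : ℂ)‖ := norm_nonneg _
    rw [abs_of_nonneg (add_nonneg (by linarith) (by positivity))]
    rcases h4.eq_or_lt with h5 | h5
    · rw [← h5]; simp
    · rw [mul_add, mul_div_cancel₀ _ h5.ne']
      nlinarith⟩

theorem psi_val (N : ℕ) (τ : ℂ → ℝ) (p : I × Disc) : (psi N τ p : ℂ) =
    (p.2 : ℂ) * (((1 - (p.1 : ℝ)) + p.1 / ‖(p.2 : ℂ)‖ : ℝ) : ℂ) *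
    ee (-(p.1 * τ ((p.2 : ℂ) ^ N)) / N) := rfl

theorem psi_cont (N : ℕ) (τ : ℂ → ℝ) (s : I) (z : Disc) (hz : (z : ℂ) ≠ 0)
    (hτ : ContinuousAt τ ((z : ℂ) ^ N)) : ContinuousAt (psi N τ) (s, z) := by
  have hp : ContinuousAt (fun p : I × Disc => τ ((p.2 : ℂ) ^ N)) (s, z) := by
    refine ContinuousAt.comp (f := fun p : I × Disc => (p.2 : ℂ) ^ N) (x := (s, z)) hτ ?_
    exact (by fun_prop : Continuous fun p : I × Disc => (p.2 : ℂ) ^ N).continuousAt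
  have hs : ContinuousAt (fun p : I × Disc => (p.1 : ℝ)) (s, z) :=
    (by fun_prop : Continuous fun p : I × Disc => (p.1 : ℝ)).continuousAt
  have hzz : ContinuousAt (fun p : I × Disc => (p.2 : ℂ)) (s, z) :=
    (by fun_prop : Continuous fun p : I × Disc => (p.2 : ℂ)).continuousAt
  refine (Topology.IsInducing.subtypeVal (t := {z : ℂ | ‖z‖ ≤ 1})).continuousAt_iff.mpr ?_
  show ContinuousAt (fun p : I × Disc => (p.2 : ℂ) * (((1 - (p.1 : ℝ)) + p.1 / ‖(p.2 : ℂ)‖ : ℝ) : ℂ) *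
    ee (-(p.1 * τ ((p.2 : ℂ) ^ N)) / N)) (s, z)
  refine (hzz.mul ?_).mul ?_
  · refine Complex.continuous_ofReal.continuousAt.comp ?_
    exact (continuousAt_const.sub hs).add (hs.div₀ hzz.norm (norm_ne_zero_iff.mpr hz))
  · exact ee_cont.continuousAt.comp ((hs.mul hp).neg.div_const _)

theorem chart_rot (g : ℕ) (hg : 1 ≤ g) (τ : ℂ → ℝ) (D : Set ℂ)
    (hD : ∀ u ∈ D, u ≠ 0 ∧ ContinuousAt τ u ∧ -1 < τ u ∧ τ u < 1 ∧ (‖u‖ : ℂ) * ee (τ u) = u)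
    (V : Set (Ng g)) (hV : IsOpen V) (hVD : ∀ z : Disc, ngmk g z ∈ V → (z : ℂ) ^ (2 * g) ∈ D) :
    ∃ K : I × Ng g → Ng g, ∀ x ∈ V, NH (vtx g) K x := by
  classical
  have hg' : ((2 * g : ℕ) : ℝ) ≠ 0 := by positivity
  let Φ : I × Disc → Ng g := fun p =>
    if (p.2 : ℂ) ^ (2 * g) ∈ D then ngmk g (psi (2 * g) τ p) else vtx g
  have hΦ : ∀ s z, ngmk g z ∈ V → Φ (s, z) = ngmk g (psi (2 * g) τ (s, z)) := by
    intro s z hz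
    exact if_pos (hVD z hz)
  have hz0 : ∀ z : Disc, (z : ℂ) ^ (2 * g) ∈ D → (z : ℂ) ≠ 0 := by
    intro z hz e
    apply (hD _ hz).1
    rw [e]
    exact zero_pow (by omega)
  refine ng_nh g hg Φ (vtx g) ?_ V hV ?_ ?_ ?_
  · intro s z w h
    obtain ⟨e1, e2, e3⟩ := rel_pow g hg z w h
    simp only [Φ]
    rw [e1]
    split_ifs with hw
    · obtain ⟨d1, d2, d3, d4, d5⟩ := hD _ hw
      obtain ⟨j, t, t0, t1, hz, hw'⟩ := h
      have hwv := hw'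
      rw [polyBP_eq] at hwv
      have ht : ∃ m : ℤ, τ ((w : ℂ) ^ (2 * g)) = t + m := by
        rw [norm_pow, e3, one_pow, Complex.ofReal_one, one_mul] at d5
        have h6 : ee (τ ((w : ℂ) ^ (2 * g))) = ee ((((2 * (j : ℕ) + 1 : ℕ) : ℝ) + t)) := by
          rw [d5, hwv, ee_pow, mul_div_cancel₀ _ hg']
        rw [ee_eq_iff] at h6
        obtain ⟨m, hm⟩ := h6
        refine ⟨m + (2 * (j : ℕ) + 1 : ℕ), ?_⟩
        rw [hm]; push_cast; ring
      obtain ⟨m, hm⟩ := ht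
      have hm1 : (-2 : ℤ) < m := by
        have : (-2 : ℝ) < m := by linarith
        exact_mod_cast this
      have hm2 : m < 1 := by
        have : (m : ℝ) < 1 := by linarith
        exact_mod_cast this
      have s0 := s.2.1
      have s1 := s.2.2
      have hm3 : t ≤ 1 ∧ 0 ≤ t - s * τ ((w : ℂ) ^ (2 * g)) ∧
          t - s * τ ((w : ℂ) ^ (2 * g)) ≤ 1 := by
        obtain rfl | rfl : m = -1 ∨ m = 0 := by omega
        · rw [hm]
          push_cast
          refine ⟨t1, ?_, ?_⟩ <;> nlinarith
        · rw [hm]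
          push_cast
          refine ⟨t1, ?_, ?_⟩ <;> nlinarith
      refine Quot.sound ⟨j, t - s * τ ((w : ℂ) ^ (2 * g)), hm3.2.1, hm3.2.2, ?_, ?_⟩
      · rw [psi_val]
        simp only
        rw [e2, e1, hz, polyBP_eq, polyBP_eq, div_one, sub_add_cancel, Complex.ofReal_one, mul_one,
          ee_mul, ← add_div]
        congr 2
        ring
      · rw [psi_val]
        simp only
        rw [e3, hwv, polyBP_eq, div_one, sub_add_cancel, Complex.ofReal_one, mul_one,
          ee_mul, ← add_div]
        congr 2
        ring
    · rfl
  · intro s z hz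
    have hzD := hVD z hz
    have h1 : ContinuousAt (fun p => ngmk g (psi (2 * g) τ p)) (s, z) :=
      (ngmk_cont g).continuousAt.comp (psi_cont _ τ s z (hz0 z hzD) (hD _ hzD).2.1)
    refine h1.congr ?_
    have hev := (((ngmk_cont g).comp continuous_snd).tendsto (s, z)).eventually (hV.mem_nhds hz)
    filter_upwards [hev] with p hp
    exact (hΦ p.1 p.2 hp).symm
  · intro z hz
    rw [hΦ _ _ hz]
    congr 1
    apply Subtype.ext
    rw [psi_val]
    have := ee_nat 0
    push_cast at this
    simp [this]
  · intro z hz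
    rw [hΦ _ _ hz]
    apply root_vtx g hg
    have hzD := hVD z hz
    have hn : (‖(z : ℂ)‖ : ℂ) ≠ 0 := by
      rw [Complex.ofReal_ne_zero, norm_ne_zero_iff]
      exact hz0 z hzD
    obtain ⟨d1, d2, d3, d4, d5⟩ := hD _ hzD
    rw [psi_val, mul_pow, mul_pow, ee_pow, mul_div_cancel₀ _ hg']
    simp only [Set.Icc.coe_one, sub_self, zero_add, one_mul]
    nth_rewrite 1 [← d5]
    rw [norm_pow]
    push_cast
    have h8 : ee (τ ((z : ℂ) ^ (2 * g))) * ee (-τ ((z : ℂ) ^ (2 * g))) = 1 := by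
      have := ee_nat 0
      push_cast at this
      rw [ee_mul, add_neg_cancel, this]
    have h9 : (‖(z : ℂ)‖ : ℂ) ^ (2 * g) * (1 / (‖(z : ℂ)‖ : ℂ)) ^ (2 * g) = 1 := by
      rw [← mul_pow, mul_one_div_cancel hn, one_pow]
    linear_combination ((‖(z : ℂ)‖ : ℂ) ^ (2 * g) * (1 / (‖(z : ℂ)‖ : ℂ)) ^ (2 * g)) * h8 + h9

theorem chart_disc (g : ℕ) (hg : 1 ≤ g)
    (V : Set (Ng g)) (hV : IsOpen V) (hVD : ∀ z : Disc, ngmk g z ∈ V → ‖(z : ℂ)‖ < 1) :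
    ∃ K : I × Ng g → Ng g, ∀ x ∈ V, NH (vtx g) K x := by
  classical
  let ln : I × Disc → Disc := fun p =>
    ⟨((1 - (p.1 : ℝ) : ℝ) : ℂ) * p.2 + ((p.1 : ℝ) : ℂ), by
      have h1 := p.2.2
      have h2 := p.1.2.1
      have h3 := p.1.2.2
      refine (norm_add_le _ _).trans ?_
      rw [norm_mul, Complex.norm_real, Complex.norm_real, Real.norm_eq_abs, Real.norm_eq_abs,
        abs_of_nonneg h2, abs_of_nonneg (by linarith)]
      nlinarith⟩
  have hln : Continuous ln := by
    refine Continuous.subtype_mk ?_ _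
    fun_prop
  let Φ : I × Disc → Ng g := fun p => if ‖(p.2 : ℂ)‖ < 1 then ngmk g (ln p) else vtx g
  have hΦ : ∀ s z, ngmk g z ∈ V → Φ (s, z) = ngmk g (ln (s, z)) := by
    intro s z hz
    exact if_pos (hVD z hz)
  refine ng_nh g hg Φ (vtx g) ?_ V hV ?_ ?_ ?_
  · intro s z w h
    obtain ⟨e1, e2, e3⟩ := rel_pow g hg z w h
    simp only [Φ, e2, e3]
    simp
  · intro s z hz
    have h1 : ContinuousAt (fun p => ngmk g (ln p)) (s, z) :=
      ((ngmk_cont g).comp hln).continuousAt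
    refine h1.congr ?_
    have hev := (((ngmk_cont g).comp continuous_snd).tendsto (s, z)).eventually (hV.mem_nhds hz)
    filter_upwards [hev] with p hp
    exact (hΦ p.1 p.2 hp).symm
  · intro z hz
    rw [hΦ _ _ hz]
    congr 1
    apply Subtype.ext
    simp [ln]
  · intro z hz
    rw [hΦ _ _ hz]
    apply root_vtx g hg
    simp [ln]

theorem arg_ee (u : ℂ) : (‖u‖ : ℂ) * ee (Complex.arg u / (2 * Real.pi)) = u := by
  have : (2 * Real.pi * Complex.I * ((Complex.arg u / (2 * Real.pi) : ℝ) : ℂ)) =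
      Complex.arg u * Complex.I := by
    have h : (Real.pi : ℂ) ≠ 0 := by exact_mod_cast Real.pi_ne_zero
    push_cast
    field_simp
  rw [ee, this]
  exact Complex.norm_mul_exp_arg_mul_I u

theorem arg_bound (u : ℂ) : -(1 / 2) < Complex.arg u / (2 * Real.pi) ∧
    Complex.arg u / (2 * Real.pi) ≤ 1 / 2 := by
  have hp := Real.pi_pos
  have h1 := Complex.neg_pi_lt_arg u
  have h2 := Complex.arg_le_pi u
  constructor
  · rw [lt_div_iff₀ (by positivity)]; linarith
  · rw [div_le_iff₀ (by positivity)]; linarith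

theorem slit_iff (u : ℂ) (h : u ∉ Complex.slitPlane) : u = -(‖u‖ : ℂ) := by
  rw [Complex.mem_slitPlane_iff] at h
  push Not at h
  obtain ⟨h1, h2⟩ := h
  have : u = ((u.re : ℝ) : ℂ) := by
    apply Complex.ext
    · simp
    · simp [h2]
  rw [this, Complex.norm_real, Real.norm_eq_abs, abs_of_nonpos h1]
  push_cast
  ring

theorem upper (n g : ℕ) (hg : 1 ≤ g) : catLE (SP n (Ng g)) (2 * n) := by
  obtain ⟨m1, hm1⟩ := ng_lift g (Z := ℝ)
    ⟨fun z => min 1 ‖(z : ℂ) ^ (2 * g) - (‖(z : ℂ) ^ (2 * g)‖ : ℂ)‖, by fun_prop⟩ (by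
      intro z w h
      have := (rel_pow g hg z w h).1
      simp only [ContinuousMap.coe_mk, this])
  obtain ⟨m2, hm2⟩ := ng_lift g (Z := ℝ)
    ⟨fun z => min 1 (2 * (1 - ‖(z : ℂ) ^ (2 * g)‖)), by fun_prop⟩ (by
      intro z w h
      have := (rel_pow g hg z w h).1
      simp only [ContinuousMap.coe_mk, this])
  simp only [ContinuousMap.coe_mk] at hm1 hm2
  have half : ∀ z : Disc, m2 (ngmk g z) < 1 → 1 / 2 < ‖(z : ℂ) ^ (2 * g)‖ := by
    intro z hz
    rw [hm2, min_lt_iff] at hz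
    rcases hz with h | h <;> linarith
  obtain ⟨K0, hK0⟩ := chart_rot g hg (fun u => Complex.arg u / (2 * Real.pi)) Complex.slitPlane
    (by
      intro u hu
      have := arg_bound u
      refine ⟨Complex.slitPlane_ne_zero hu, (Complex.continuousAt_arg hu).div_const _, ?_, ?_,
        arg_ee u⟩
      · linarith
      · linarith)
    {x | m1 x < 1 ∧ m2 x < 1}
    ((isOpen_lt m1.continuous continuous_const).inter (isOpen_lt m2.continuous continuous_const))
    (by
      rintro z ⟨a, b⟩
      have h1 := half z b
      by_contra hs
      have h2 := slit_iff _ hs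
      rw [hm1, min_lt_iff] at a
      rcases a with a | a
      · linarith
      · set u := (z : ℂ) ^ (2 * g) with hu
        have h3 : u - (‖u‖ : ℂ) = ((-(2 * ‖u‖) : ℝ) : ℂ) := by
          nth_rewrite 1 [h2]
          push_cast; ring
        rw [h3, Complex.norm_real, norm_neg, Real.norm_eq_abs, abs_of_nonneg (by positivity)] at a
        linarith)
  obtain ⟨K1, hK1⟩ := chart_rot g hg (fun u => Complex.arg (-u) / (2 * Real.pi) + 1 / 2)
    {u | -u ∈ Complex.slitPlane}
    (by
      intro u hu
      have hu : -u ∈ Complex.slitPlane := hu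
      have hb := arg_bound (-u)
      refine ⟨?_, ?_, ?_, ?_, ?_⟩
      · have := Complex.slitPlane_ne_zero hu
        simpa using this
      · refine ContinuousAt.add ?_ continuousAt_const
        refine ContinuousAt.div_const ?_ _
        exact ContinuousAt.comp (f := fun u : ℂ => -u) (Complex.continuousAt_arg hu)
          continuous_neg.continuousAt
      · linarith
      · have h1 := Complex.mem_slitPlane_iff_arg.mp hu
        have h2 : Complex.arg (-u) / (2 * Real.pi) ≠ 1 / 2 := by
          intro e
          apply h1.1
          have hp := Real.pi_pos
          rw [div_eq_iff (by positivity)] at e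
          rw [e]; ring
        have := lt_of_le_of_ne hb.2 h2
        linarith
      · have := arg_ee (-u)
        rw [norm_neg] at this
        rw [ee_half, mul_neg, this, neg_neg])
    {x | 0 < m1 x ∧ m2 x < 1}
    ((isOpen_lt continuous_const m1.continuous).inter (isOpen_lt m2.continuous continuous_const))
    (by
      rintro z ⟨a, b⟩
      show -((z : ℂ) ^ (2 * g)) ∈ Complex.slitPlane
      by_contra hs
      have h2 := slit_iff _ hs
      rw [norm_neg, neg_inj] at h2
      rw [hm1, ← h2, sub_self, norm_zero] at a
      simp at a)
  obtain ⟨K2, hK2⟩ := chart_disc g hg {x | 0 < m2 x} (isOpen_lt continuous_const m2.continuous)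
    (by
      intro z hz
      have hz : 0 < m2 (ngmk g z) := hz
      rw [hm2, lt_min_iff] at hz
      have h1 : ‖(z : ℂ) ^ (2 * g)‖ < 1 := by linarith [hz.2]
      rw [norm_pow] at h1
      by_contra h
      push Not at h
      have := one_le_pow₀ h (n := 2 * g)
      linarith)
  exact upper_gen n m1 m2 (vtx g) K0 K1 K2 (fun x a b => hK0 x ⟨a, b⟩) (fun x a b => hK1 x ⟨a, b⟩)
    (fun x a => hK2 x a)

end LSNg

/-- **Theorem B.** For `n, g ≥ 1`, `cat(SPⁿ(N_g)) = 2n`. -/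
theorem LScat_SP_nonorientableSurface (n g : ℕ) (hn : 1 ≤ n) (hg : 1 ≤ g) :
    LScat (SP n (Ng g)) = ((2 * n : ℕ) : ℕ∞) := by
  apply le_antisymm
  · exact sInf_le ⟨2 * n, LSNg.upper n g hg, rfl⟩
  · refine le_sInf ?_
    rintro _ ⟨r, hr, rfl⟩
    exact_mod_cast LSNg.lower n g r hg hr

end
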